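/- arXiv:2407.12586 — 9 statements merged into one kernel-verified Lean document; each statement's English description precedes it below -/
import Mathlib

section
/- For all positive integers a and b, gcd(2^a + 1, 2^b + 1) = 1 if and only if the 2-adic valuations of a and b are different (i.e., the largest power of 2 dividing a is not equal to the largest power of 2 dividing b). -/
lemma aux_coprime (s t u v : ℕ) (hu : Odd u) (hv : Odd v) (hst : s < t) :
    Nat.gcd (2 ^ (2 ^ s * u) + 1) (2 ^ (2 ^ t * v) + 1) = 1 := by
  set d := Nat.gcd (2 ^ (2 ^ s * u) + 1) (2 ^ (2 ^ t * v) + 1) with hd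
  have h1 : ((2 ^ (2 ^ s * u) + 1 : ℕ) : ZMod d) = 0 :=
    (ZMod.natCast_eq_zero_iff _ _).2 (Nat.gcd_dvd_left _ _)
  have h2 : ((2 ^ (2 ^ t * v) + 1 : ℕ) : ZMod d) = 0 :=
    (ZMod.natCast_eq_zero_iff _ _).2 (Nat.gcd_dvd_right _ _)
  push_cast at h1 h2
  have h1' := eq_neg_of_add_eq_zero_left h1
  have h2' := eq_neg_of_add_eq_zero_left h2
  obtain ⟨k, rfl⟩ := Nat.exists_eq_add_of_lt hst
  have e1 : (2 : ZMod d) ^ (2 ^ (s + k + 1) * v * u) = -1 := by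
    rw [pow_mul, h2', hu.neg_one_pow]
  have e2 : (2 : ZMod d) ^ (2 ^ (s + k + 1) * v * u) = 1 := by
    have : 2 ^ (s + k + 1) * v * u = 2 ^ s * u * (2 * (2 ^ k * v)) := by ring
    rw [this, pow_mul, h1', pow_mul]; simp
  have e3 : (2 : ZMod d) = 0 := by
    have := e2.symm.trans e1
    linear_combination this
  have hz : (2 : ZMod d) ^ (2 ^ s * u) = 0 := by
    rw [e3, zero_pow]
    have := hu.pos
    positivity
  have h0 : ((1 : ℕ) : ZMod d) = 0 := by
    rw [hz] at h1; simpa using h1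
  exact Nat.dvd_one.1 ((ZMod.natCast_eq_zero_iff _ _).1 h0)

lemma aux_val (s u : ℕ) (hu : Odd u) : padicValNat 2 (2 ^ s * u) = s := by
  have hu0 : u ≠ 0 := hu.pos.ne'
  rw [padicValNat.mul (by positivity) hu0, padicValNat.prime_pow,
    padicValNat.eq_zero_of_not_dvd hu.not_two_dvd_nat, add_zero]

/-- For all positive integers `a` and `b`, `gcd(2^a + 1, 2^b + 1) = 1` if and only if
the 2-adic valuations of `a` and `b` are different. -/
theorem stmt_0 (a b : ℕ) (ha : 0 < a) (hb : 0 < b) :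
    Nat.gcd (2 ^ a + 1) (2 ^ b + 1) = 1 ↔ padicValNat 2 a ≠ padicValNat 2 b := by
  obtain ⟨s, u, hu, rfl⟩ := Nat.exists_eq_two_pow_mul_odd ha.ne'
  obtain ⟨t, v, hv, rfl⟩ := Nat.exists_eq_two_pow_mul_odd hb.ne'
  rw [aux_val s u hu, aux_val t v hv]
  constructor
  · rintro h rfl
    have d1 : 2 ^ (2 ^ s) + 1 ∣ 2 ^ (2 ^ s * u) + 1 := by
      simpa [pow_mul] using hu.nat_add_dvd_pow_add_pow (2 ^ (2 ^ s)) 1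
    have d2 : 2 ^ (2 ^ s) + 1 ∣ 2 ^ (2 ^ s * v) + 1 := by
      simpa [pow_mul] using hv.nat_add_dvd_pow_add_pow (2 ^ (2 ^ s)) 1
    have := Nat.dvd_gcd d1 d2
    rw [h, Nat.dvd_one] at this
    have : 0 < 2 ^ (2 ^ s) := by positivity
    omega
  · intro h
    rcases lt_or_gt_of_ne h with h | h
    · exact aux_coprime s t u v hu hv h
    · rw [Nat.gcd_comm]
      exact aux_coprime t s v u hv hu h
end

section
/- Let p be a prime, d ≥ 1 an integer, and q = p^d − 1 ≥ 2. Let D > M ≥ 0 be integers with D ≥ 1, and let a_1, …, a_D, b_1, …, b_M ∈ {0, 1, …, q − 1} be such that all D + M of these numbers are pairwise distinct. Then the following two conditions are equivalent: (I) for every integer N with 1 ≤ N ≤ q − 1 and gcd(N, q) = 1 and every rational number x whose denominator is prime to p, one has ∑_{i=1}^{D} V(N·a_i/q + x) + ∑_{j=1}^{M} V(−N·b_j/q − x) ≥ (D + M − 1)/2; (II) for every such N and x, one has ∑_{i=1}^{D} V(N·a_i/q + x) + ∑_{j=1}^{M} V(−N·b_j/q − x) ≥ (D − 1)/2 + (1/D)·∑_{i=1}^{D}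 ∑_{j=1}^{M} V(N·(a_i − b_j)/q). -/
/-- `IsVp p V` says that `V : ℚ → ℚ` is the Kubert `V`-function in characteristic `p`:
for any rational `x` (with denominator prime to `p`), any `k ≥ 1` and any integer `a`
with `0 ≤ a < p^k - 1` such that `x - a/(p^k - 1)` is an integer, `V x` equals the
base-`p` digit sum of `a` divided by `k (p - 1)`. -/
def IsVp (p : ℕ) (V : ℚ → ℚ) : Prop :=
  ∀ (x : ℚ) (k a : ℕ), 0 < k → a < p ^ k - 1 →
    (∃ z : ℤ, x - (a : ℚ) / ((p : ℚ) ^ k - 1) = (z : ℚ)) →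
    V x = ((Nat.digits p a).sum : ℚ) / ((k : ℚ) * ((p : ℚ) - 1))

theorem aux_digits (p : ℕ) (hp : 2 ≤ p) (d : ℕ) : ∀ a : ℕ, a < p ^ d →
    (Nat.digits p a).sum + (Nat.digits p (p ^ d - 1 - a)).sum = d * (p - 1) := by
  have key : ∀ n : ℕ, (Nat.digits p n).sum = n % p + (Nat.digits p (n / p)).sum := by
    intro n
    rcases Nat.eq_zero_or_pos n with h | h
    · subst h; simp
    · rw [Nat.digits_def' (by omega) h]; simp
  induction d with
  | zero =>
    intro a ha
    have : a = 0 := by simpa using ha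
    subst this; simp
  | succ d ih =>
    intro a ha
    have h1 : a / p < p ^ d := by
      apply Nat.div_lt_of_lt_mul
      rw [pow_succ] at ha
      linarith [mul_comm (p ^ d) p]
    have hr : a % p < p := Nat.mod_lt _ (by omega)
    have hE : p ^ (d + 1) - 1 - a = (p - 1 - a % p) + p * (p ^ d - 1 - a / p) := by
      have h2 := Nat.mod_add_div a p
      obtain ⟨u, hu⟩ : ∃ u, p ^ d = a / p + 1 + u := ⟨p ^ d - (a / p + 1), by omega⟩
      have h3 : p ^ d - 1 - a / p = u := by omega
      have h4 : p ^ (d + 1) = p * (a / p) + p + p * u := by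
        rw [pow_succ, hu]; ring
      rw [h3, h4]; omega
    rw [key a, key (p ^ (d + 1) - 1 - a), hE, Nat.add_mul_mod_self_left,
      Nat.add_mul_div_left _ _ (by omega), Nat.mod_eq_of_lt (by omega : p - 1 - a % p < p),
      Nat.div_eq_of_lt (by omega : p - 1 - a % p < p), zero_add]
    have := ih (a / p) h1
    rw [Nat.add_mul, one_mul]
    omega

theorem aux_V (p : ℕ) (hp : p.Prime) (d : ℕ) (hd : 1 ≤ d) (q : ℕ)
    (hq : q = p ^ d - 1) (hq2 : 2 ≤ q) (V : ℚ → ℚ) (hV : IsVp p V) (c : ℤ) :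
    V ((c : ℚ) / q) =
      ((Nat.digits p (c % (q : ℤ)).toNat).sum : ℚ) / ((d : ℚ) * ((p : ℚ) - 1)) := by
  have hq0 : (q : ℤ) ≠ 0 := by omega
  have hq0' : (q : ℚ) ≠ 0 := by positivity
  have h0 := Int.emod_nonneg c hq0
  have h1 := Int.emod_lt_of_pos c (by omega : (0 : ℤ) < q)
  have hqQ : (p : ℚ) ^ d - 1 = q := by
    have : p ^ d = q + 1 := by omega
    have h : ((p ^ d : ℕ) : ℚ) = ((q + 1 : ℕ) : ℚ) := by rw [this]
    push_cast at h; linarith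
  apply hV _ d _ (by omega) (by omega)
  refine ⟨c / (q : ℤ), ?_⟩
  rw [hqQ]
  have h2 : (((c % (q : ℤ)).toNat : ℕ) : ℚ) = ((c % (q : ℤ) : ℤ) : ℚ) := by
    rw [← Int.cast_natCast, Int.toNat_of_nonneg h0]
  have h3 : (c : ℚ) = ((c % (q : ℤ) : ℤ) : ℚ) + q * ((c / (q : ℤ) : ℤ) : ℚ) := by
    exact_mod_cast (Int.emod_add_mul_ediv c q).symm
  rw [h2]
  field_simp
  linarith

theorem aux_sum (n : ℕ) (g : Fin n → Fin n → ℚ) (h0 : ∀ i, g i i = 0)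
    (h1 : ∀ i j, i ≠ j → g i j + g j i = 1) :
    ∑ i, ∑ j, g i j = (n : ℚ) * ((n : ℚ) - 1) / 2 := by
  have h : ∑ i, ∑ j, (g i j + g j i) = (n : ℚ) * ((n : ℚ) - 1) := by
    have : ∀ i j, g i j + g j i = 1 - if i = j then 1 else 0 := by
      intro i j
      split_ifs with hh
      · subst hh; simp [h0]
      · rw [h1 i j hh]; ring
    simp [this]; ring
  simp only [Finset.sum_add_distrib] at h
  rw [Finset.sum_comm (f := fun i j => g j i)] at h
  linarith

theorem aux_row (n : ℕ) (i0 : Fin n) (g : Fin n → ℚ) (h0 : g i0 = 0)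
    (h1 : ∀ i, i ≠ i0 → g i = 1) : ∑ i, g i = (n : ℚ) - 1 := by
  have : ∀ i, g i = 1 - if i = i0 then 1 else 0 := by
    intro i
    split_ifs with hh
    · subst hh; simp [h0]
    · rw [h1 i hh]; ring
  simp [this]

/-- Kubert's `V`-test criterion: the inequality with right-hand side `(D + M - 1)/2`
holds for all admissible `(N, x)` iff the inequality with right-hand side
`(D-1)/2 + (1/D) ∑_{i,j} V(N (a_i - b_j)/q)` does. -/
theorem stmt_1 (p : ℕ) (hp : p.Prime) (d : ℕ) (hd : 1 ≤ d) (q : ℕ)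
    (hq : q = p ^ d - 1) (hq2 : 2 ≤ q)
    (D M : ℕ) (hD : 1 ≤ D) (hDM : M < D)
    (a : Fin D → ℕ) (b : Fin M → ℕ)
    (ha : ∀ i, a i < q) (hb : ∀ j, b j < q)
    (hainj : Function.Injective a) (hbinj : Function.Injective b)
    (hab : ∀ i j, a i ≠ b j)
    (V : ℚ → ℚ) (hV : IsVp p V) :
    (∀ N : ℕ, 1 ≤ N → N ≤ q - 1 → Nat.Coprime N q →
        ∀ x : ℚ, ¬ (p ∣ x.den) →
        (∑ i, V ((N : ℚ) * (a i : ℚ) / (q : ℚ) + x)) +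
          (∑ j, V (-((N : ℚ) * (b j : ℚ) / (q : ℚ)) - x)) ≥
          ((D : ℚ) + (M : ℚ) - 1) / 2) ↔
      (∀ N : ℕ, 1 ≤ N → N ≤ q - 1 → Nat.Coprime N q →
        ∀ x : ℚ, ¬ (p ∣ x.den) →
        (∑ i, V ((N : ℚ) * (a i : ℚ) / (q : ℚ) + x)) +
          (∑ j, V (-((N : ℚ) * (b j : ℚ) / (q : ℚ)) - x)) ≥
          ((D : ℚ) - 1) / 2 +
            (1 / (D : ℚ)) * ∑ i, ∑ j, V ((N : ℚ) * ((a i : ℚ) - (b j : ℚ)) / (q : ℚ))) := by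
  have hq0 : (q : ℚ) ≠ 0 := by positivity
  obtain ⟨f, hf⟩ : ∃ f : ℤ → ℚ, ∀ c : ℤ, f c = V ((c : ℚ) / q) := ⟨_, fun _ => rfl⟩
  have hf' : ∀ c, f c = ((Nat.digits p (c % (q : ℤ)).toNat).sum : ℚ) / ((d : ℚ) * ((p : ℚ) - 1)) :=
    fun c => (hf c).trans (aux_V p hp d hd q hq hq2 V hV c)
  have fper : ∀ c z : ℤ, f (c + q * z) = f c := by
    intro c z; rw [hf', hf', Int.add_mul_emod_self_left]
  have f0 : f 0 = 0 := by rw [hf']; simp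
  have fneg : ∀ c : ℤ, ¬ ((q : ℤ) ∣ c) → f c + f (-c) = 1 := by
    intro c hc
    have h0 := Int.emod_nonneg c (by omega : (q : ℤ) ≠ 0)
    have h1 := Int.emod_lt_of_pos c (by omega : (0 : ℤ) < q)
    have h2 : c % (q : ℤ) ≠ 0 := fun h => hc (Int.dvd_of_emod_eq_zero h)
    have h3 : (-c) % (q : ℤ) = q - c % q := by
      have e := Int.emod_add_mul_ediv c q
      have : -c = (q - c % q) + q * (-(c / q) - 1) := by linarith
      rw [this, Int.add_mul_emod_self_left, Int.emod_eq_of_lt (by omega) (by omega)]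
    have h4 : ((-c) % (q : ℤ)).toNat = p ^ d - 1 - (c % (q : ℤ)).toNat := by
      rw [h3]; omega
    have h5 := aux_digits p hp.two_le d (c % (q : ℤ)).toNat (by omega)
    rw [hf', hf', h4, ← add_div, ← Nat.cast_add, h5]
    have hp2 := hp.two_le
    have : (p : ℚ) - 1 = ((p - 1 : ℕ) : ℚ) := by
      rw [Nat.cast_sub (by omega)]; simp
    rw [this, ← Nat.cast_mul]
    apply div_self
    have : d * (p - 1) ≠ 0 := Nat.mul_ne_zero (by omega) (by omega)
    exact_mod_cast this
  -- denominators
  have hden : ∀ c : ℤ, ¬ (p ∣ ((c : ℚ) / q).den) := by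
    intro c h
    have h1 : (((c : ℚ) / q).den : ℤ) ∣ q := by
      have := Rat.den_dvd c q
      rwa [Rat.divInt_eq_div] at this
    have h2 : p ∣ q := h.trans (by exact_mod_cast h1)
    have h3 : p ∣ q + 1 := by
      have : q + 1 = p ^ d := by have := Nat.pos_of_ne_zero (pow_ne_zero d hp.ne_zero); omega
      rw [this]; exact dvd_pow_self p (by omega)
    have : p ∣ 1 := (Nat.dvd_add_right h2).1 h3
    exact hp.one_lt.ne' (Nat.dvd_one.1 this)
  -- non-divisibility
  have hnd : ∀ N : ℕ, Nat.Coprime N q → ∀ s t : ℕ, s < q → t < q → s ≠ t →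
      ¬ ((q : ℤ) ∣ (N : ℤ) * ((s : ℤ) - t)) := by
    intro N hN s t hs ht hst h
    have h1 : IsCoprime (q : ℤ) (N : ℤ) := (Nat.isCoprime_iff_coprime.2 hN).symm
    have h2 := h1.dvd_of_dvd_mul_left h
    have h3 := Int.eq_zero_of_abs_lt_dvd h2 (by rw [abs_lt]; constructor <;> omega)
    omega
  -- the sums at the special points
  have e1 : ∀ N t : ℕ,
      (∑ i, V ((N : ℚ) * (a i : ℚ) / (q : ℚ) + ((-(N * t) : ℤ) : ℚ) / q)) +
          (∑ j, V (-((N : ℚ) * (b j : ℚ) / (q : ℚ)) - ((-(N * t) : ℤ) : ℚ) / q)) =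
      (∑ i, f ((N : ℤ) * ((a i : ℤ) - t))) + ∑ j, f ((N : ℤ) * ((t : ℤ) - b j)) := by
    intro N t
    congr 1 <;> refine Finset.sum_congr rfl fun i _ => ?_ <;> rw [hf] <;> congr 1 <;>
      push_cast <;> field_simp <;> ring
  have e2 : ∀ N t : ℕ, N ≤ q →
      (∑ i, V (((q - N : ℕ) : ℚ) * (a i : ℚ) / (q : ℚ) + ((N * t : ℤ) : ℚ) / q)) +
          (∑ j, V (-(((q - N : ℕ) : ℚ) * (b j : ℚ) / (q : ℚ)) - ((N * t : ℤ) : ℚ) / q)) =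
      (∑ i, f (-((N : ℤ) * ((a i : ℤ) - t)))) + ∑ j, f (-((N : ℤ) * ((t : ℤ) - b j))) := by
    intro N t hN
    congr 1 <;> refine Finset.sum_congr rfl fun i _ => ?_
    · rw [← fper _ (a i : ℤ), hf]; congr 1; push_cast [Nat.cast_sub hN]; field_simp; ring
    · rw [← fper _ (-(b i : ℤ)), hf]; congr 1; push_cast [Nat.cast_sub hN]; field_simp; ring
  have e3 : ∀ N : ℕ, (∑ i, ∑ j, V ((N : ℚ) * ((a i : ℚ) - (b j : ℚ)) / (q : ℚ))) =
      ∑ i, ∑ j, f ((N : ℤ) * ((a i : ℤ) - b j)) := by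
    intro N
    refine Finset.sum_congr rfl fun i _ => Finset.sum_congr rfl fun j _ => ?_
    rw [hf]; push_cast; rfl
  have e4 : ∀ N : ℕ, N ≤ q → Nat.Coprime N q →
      (∑ i, ∑ j, V (((q - N : ℕ) : ℚ) * ((a i : ℚ) - (b j : ℚ)) / (q : ℚ))) =
      (D : ℚ) * M - ∑ i, ∑ j, f ((N : ℤ) * ((a i : ℤ) - b j)) := by
    intro N hN hc
    have : ∀ i j, V (((q - N : ℕ) : ℚ) * ((a i : ℚ) - (b j : ℚ)) / (q : ℚ)) =
        1 - f ((N : ℤ) * ((a i : ℤ) - b j)) := by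
      intro i j
      rw [← fneg _ (hnd N hc _ _ (ha i) (hb j) (hab i j)), add_sub_cancel_left,
        ← fper _ ((a i : ℤ) - b j), hf]
      congr 1; push_cast [Nat.cast_sub hN]; field_simp; ring
    simp only [this, Finset.sum_sub_distrib]
    simp
  have sA : ∀ N : ℕ, Nat.Coprime N q → ∀ i0,
      (∑ i, f ((N : ℤ) * ((a i : ℤ) - a i0))) + (∑ j, f ((N : ℤ) * ((a i0 : ℤ) - b j))) +
      ((∑ i, f (-((N : ℤ) * ((a i : ℤ) - a i0)))) + ∑ j, f (-((N : ℤ) * ((a i0 : ℤ) - b j)))) =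
      (D : ℚ) + M - 1 := by
    intro N hN i0
    have h1 := aux_row D i0
      (fun i => f ((N : ℤ) * ((a i : ℤ) - a i0)) + f (-((N : ℤ) * ((a i : ℤ) - a i0))))
      (by simp [f0])
      (fun i hi => fneg _ (hnd N hN _ _ (ha i) (ha i0) (fun h => hi (hainj h))))
    have h2 : ∑ j, (f ((N : ℤ) * ((a i0 : ℤ) - b j)) + f (-((N : ℤ) * ((a i0 : ℤ) - b j)))) =
        (M : ℚ) := by
      rw [Finset.sum_congr rfl fun j _ => fneg _ (hnd N hN _ _ (ha i0) (hb j) (hab i0 j))]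
      simp
    simp only [Finset.sum_add_distrib] at h1 h2
    linarith
  have sB : ∀ N : ℕ, Nat.Coprime N q → ∀ j0,
      (∑ i, f ((N : ℤ) * ((a i : ℤ) - b j0))) + (∑ j, f ((N : ℤ) * ((b j0 : ℤ) - b j))) +
      ((∑ i, f (-((N : ℤ) * ((a i : ℤ) - b j0)))) + ∑ j, f (-((N : ℤ) * ((b j0 : ℤ) - b j)))) =
      (D : ℚ) + M - 1 := by
    intro N hN j0
    have h1 := aux_row M j0
      (fun j => f ((N : ℤ) * ((b j0 : ℤ) - b j)) + f (-((N : ℤ) * ((b j0 : ℤ) - b j))))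
      (by simp [f0])
      (fun j hj => fneg _ (hnd N hN _ _ (hb j0) (hb j) (fun h => hj (hbinj h).symm)))
    have h2 : ∑ i, (f ((N : ℤ) * ((a i : ℤ) - b j0)) + f (-((N : ℤ) * ((a i : ℤ) - b j0)))) =
        (D : ℚ) := by
      rw [Finset.sum_congr rfl fun i _ => fneg _ (hnd N hN _ _ (ha i) (hb j0) (hab i j0))]
      simp
    simp only [Finset.sum_add_distrib] at h1 h2
    linarith
  have tA : ∀ N : ℕ, Nat.Coprime N q →
      ∑ i0, ((∑ i, f ((N : ℤ) * ((a i : ℤ) - a i0))) + ∑ j, f ((N : ℤ) * ((a i0 : ℤ) - b j))) =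
      (D : ℚ) * (D - 1) / 2 + ∑ i, ∑ j, f ((N : ℤ) * ((a i : ℤ) - b j)) := by
    intro N hN
    rw [Finset.sum_add_distrib,
      aux_sum D (fun i0 i => f ((N : ℤ) * ((a i : ℤ) - a i0))) (by simp [f0])]
    intro i j hij
    rw [← fneg _ (hnd N hN _ _ (ha j) (ha i) (fun h => hij (hainj h).symm))]
    congr 2; ring
  have tB : ∀ N : ℕ, Nat.Coprime N q →
      ∑ j0, ((∑ i, f ((N : ℤ) * ((a i : ℤ) - b j0))) + ∑ j, f ((N : ℤ) * ((b j0 : ℤ) - b j))) =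
      (M : ℚ) * (M - 1) / 2 + ∑ i, ∑ j, f ((N : ℤ) * ((a i : ℤ) - b j)) := by
    intro N hN
    rw [Finset.sum_add_distrib,
      aux_sum M (fun j0 j => f ((N : ℤ) * ((b j0 : ℤ) - b j))) (by simp [f0]),
      Finset.sum_comm, add_comm]
    intro i j hij
    rw [← fneg _ (hnd N hN _ _ (hb i) (hb j) (fun h => hij (hbinj h)))]
    congr 2; ring
  have hDQ : (0 : ℚ) < D := by exact_mod_cast hD
  have hcop : ∀ N : ℕ, N ≤ q → Nat.Coprime N q → Nat.Coprime (q - N) q := by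
    intro N h1 h2
    exact (Nat.coprime_self_sub_left h1).2 h2
  constructor
  · intro H N hN1 hN2 hN x hx
    have hG : ∀ i0, (∑ i, f ((N : ℤ) * ((a i : ℤ) - a i0))) +
        ∑ j, f ((N : ℤ) * ((a i0 : ℤ) - b j)) = ((D : ℚ) + M - 1) / 2 := by
      intro i0
      have h1 := H N hN1 hN2 hN _ (hden (-(N * a i0)))
      have h2 := H (q - N) (by omega) (by omega) (hcop N (by omega) hN) _ (hden (N * a i0))
      rw [e1] at h1
      rw [e2 N _ (by omega)] at h2
      have h3 := sA N hN i0
      linarith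
    have hT := tA N hN
    rw [Finset.sum_congr rfl fun i _ => hG i] at hT
    simp only [Finset.sum_const, Finset.card_univ, Fintype.card_fin, nsmul_eq_mul] at hT
    have h := H N hN1 hN2 hN x hx
    rw [e3]
    have hS : ∑ i, ∑ j, f ((N : ℤ) * ((a i : ℤ) - b j)) = D * (M / 2 : ℚ) := by linarith
    rw [hS, ← mul_assoc, one_div, inv_mul_cancel₀ hDQ.ne']
    linarith
  · intro H N hN1 hN2 hN x hx
    have h := H N hN1 hN2 hN x hx
    rw [e3] at h
    suffices hS : ∑ i, ∑ j, f ((N : ℤ) * ((a i : ℤ) - b j)) = D * (M / 2 : ℚ) by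
      rw [hS, ← mul_assoc, one_div, inv_mul_cancel₀ hDQ.ne'] at h
      linarith
    obtain ⟨S, hSd⟩ : ∃ S : ℚ, ∑ i, ∑ j, f ((N : ℤ) * ((a i : ℤ) - b j)) = D * S :=
      ⟨(∑ i, ∑ j, f ((N : ℤ) * ((a i : ℤ) - b j))) / D, by field_simp⟩
    have hG : ∀ j0, (∑ i, f ((N : ℤ) * ((a i : ℤ) - b j0))) +
        ∑ j, f ((N : ℤ) * ((b j0 : ℤ) - b j)) = ((D : ℚ) - 1) / 2 + S := by
      intro j0
      have h1 := H N hN1 hN2 hN _ (hden (-(N * b j0)))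
      have h2 := H (q - N) (by omega) (by omega) (hcop N (by omega) hN) _ (hden (N * b j0))
      rw [e1, e3, hSd, ← mul_assoc, one_div, inv_mul_cancel₀ hDQ.ne'] at h1
      rw [e2 N _ (by omega), e4 N (by omega) hN, hSd, ← mul_sub, ← mul_assoc, one_div,
        inv_mul_cancel₀ hDQ.ne'] at h2
      have h3 := sB N hN j0
      linarith
    have hT := tB N hN
    rw [Finset.sum_congr rfl fun i _ => hG i, hSd] at hT
    simp only [Finset.sum_const, Finset.card_univ, Fintype.card_fin, nsmul_eq_mul] at hT
    have hDM' : (M : ℚ) < D := by exact_mod_cast hDM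
    rw [hSd]
    have h5 : ((D : ℚ) - M) * (S - M / 2) = 0 := by linarith
    rcases mul_eq_zero.1 h5 with h6 | h6
    · linarith
    · rw [sub_eq_zero.1 h6]
end

section
/- For every positive integer r and every rational number x with odd denominator, one has V((2^r + 1)·x) ≤ 2·V(x) ≤ V((2^r + 1)·x) + 1. -/
/-- `IsV2 V` says that `V : ℚ → ℚ` is the Kubert `V`-function in characteristic 2:
for any rational `x` (with odd denominator), any `k ≥ 1` and any integer `a` with
`0 ≤ a < 2^k - 1` such that `x - a/(2^k - 1)` is an integer, `V x` equals the
binary digit sum of `a` divided by `k`. -/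
def IsV2 (V : ℚ → ℚ) : Prop :=
  ∀ (x : ℚ) (k a : ℕ), 0 < k → a < 2 ^ k - 1 →
    (∃ z : ℤ, x - (a : ℚ) / ((2 : ℚ) ^ k - 1) = (z : ℚ)) →
    V x = ((Nat.digits 2 a).sum : ℚ) / (k : ℚ)

theorem ds_rec (a : ℕ) : (Nat.digits 2 a).sum = a % 2 + (Nat.digits 2 (a / 2)).sum := by
  rcases Nat.eq_zero_or_pos a with rfl | h
  · simp
  · rw [Nat.digits_def' (by norm_num) h]; simp

theorem ds_succ (a : ℕ) : (Nat.digits 2 (a + 1)).sum ≤ (Nat.digits 2 a).sum + 1 := by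
  induction a using Nat.strong_induction_on with
  | _ a ih =>
    rcases Nat.eq_zero_or_pos a with rfl | h
    · simp
    rw [ds_rec (a + 1), ds_rec a]
    by_cases hc : a % 2 = 1
    · have e : (a + 1) / 2 = a / 2 + 1 := by omega
      have := ih (a / 2) (by omega)
      rw [e]; omega
    · have e : (a + 1) / 2 = a / 2 := by omega
      rw [e]; omega

theorem ds_add (a : ℕ) : ∀ b, (Nat.digits 2 (a + b)).sum ≤ (Nat.digits 2 a).sum + (Nat.digits 2 b).sum := by
  induction a using Nat.strong_induction_on with
  | _ a ih =>
    intro b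
    induction b using Nat.strong_induction_on with
    | _ b ihb =>
      rcases Nat.eq_zero_or_pos a with rfl | ha
      · simp
      rw [ds_rec (a + b), ds_rec a, ds_rec b]
      have h1 := ih (a / 2) (by omega) (b / 2)
      by_cases hc : a % 2 = 1 ∧ b % 2 = 1
      · have e : (a + b) / 2 = a / 2 + (b / 2 + 1) := by omega
        have h2 := ih (a / 2) (by omega) (b / 2 + 1)
        have h3 : (Nat.digits 2 (b / 2 + 1)).sum ≤ (Nat.digits 2 (b / 2)).sum + 1 := ds_succ _
        rw [e]; omega
      · have e : (a + b) / 2 = a / 2 + b / 2 := by omega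
        rw [e]; omega

theorem ds_pow (r a : ℕ) : (Nat.digits 2 (2 ^ r * a)).sum = (Nat.digits 2 a).sum := by
  induction r with
  | zero => simp
  | succ r ih =>
    rw [ds_rec, ← ih]
    have : 2 ^ (r + 1) * a = 2 * (2 ^ r * a) := by ring
    rw [this]
    simp

theorem ds_split (k : ℕ) : ∀ c, (Nat.digits 2 c).sum =
    (Nat.digits 2 (c / 2 ^ k)).sum + (Nat.digits 2 (c % 2 ^ k)).sum := by
  induction k with
  | zero => intro c; simp [Nat.mod_one]
  | succ k ih =>
    intro c
    rw [ds_rec c, ds_rec (c % 2 ^ (k + 1)), ih (c / 2)]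
    have e1 : c / 2 / 2 ^ k = c / 2 ^ (k + 1) := by rw [Nat.div_div_eq_div_mul, pow_succ']
    have e2 : c % 2 ^ (k + 1) % 2 = c % 2 := Nat.mod_mod_of_dvd _ (Dvd.intro_left _ rfl)
    have e3 : c % 2 ^ (k + 1) / 2 = c / 2 % 2 ^ k := by
      rw [pow_succ', Nat.mod_mul_right_div_self]
    rw [e1, e2, e3]; omega

theorem ds_compl (k : ℕ) : ∀ a b, a + b + 1 = 2 ^ k →
    (Nat.digits 2 a).sum + (Nat.digits 2 b).sum = k := by
  induction k with
  | zero =>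
    intro a b h
    have : a = 0 := by simp at h; omega
    have : b = 0 := by simp at h; omega
    subst a b; simp
  | succ k ih =>
    intro a b h
    rw [pow_succ] at h
    have := ih (a / 2) (b / 2) (by omega)
    rw [ds_rec a, ds_rec b]; omega

theorem ds_mod (k : ℕ) (c : ℕ) :
    (Nat.digits 2 (c % (2 ^ k - 1))).sum ≤ (Nat.digits 2 c).sum := by
  induction c using Nat.strong_induction_on with
  | _ c ih =>
    by_cases hk : k = 0
    · subst hk; simp
    have h2 : 2 ≤ 2 ^ k := by
      calc 2 = 2 ^ 1 := by norm_num
        _ ≤ 2 ^ k := Nat.pow_le_pow_right (by norm_num) (by omega)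
    have hs := ds_split k c
    have ha := ds_add (c / 2 ^ k) (c % 2 ^ k)
    have hd := Nat.div_add_mod c (2 ^ k)
    by_cases hq : c < 2 ^ k
    · by_cases h : c = 2 ^ k - 1
      · rw [← h]; simp
      · rw [Nat.mod_eq_of_lt (by omega)]
    · have hq : 0 < c / 2 ^ k := Nat.div_pos (by omega) (by omega)
      generalize c / 2 ^ k = q at *
      generalize c % 2 ^ k = t at *
      obtain ⟨N, hN⟩ : ∃ N, 2 ^ k = N + 1 := ⟨2 ^ k - 1, by omega⟩
      have hlt : q + t < c := by rw [hN] at hd h2; nlinarith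
      have := ih _ hlt
      have e : c % (2 ^ k - 1) = (q + t) % (2 ^ k - 1) := by
        rw [hN, Nat.add_sub_cancel, ← hd, hN,
          show (N + 1) * q + t = q + t + N * q by ring, Nat.add_mul_mod_self_left]
      rw [e]; omega

theorem ds_A (k r a : ℕ) : (Nat.digits 2 ((2 ^ r + 1) * a % (2 ^ k - 1))).sum
    ≤ 2 * (Nat.digits 2 a).sum := by
  have h1 := ds_mod k ((2 ^ r + 1) * a)
  have h2 := ds_add (2 ^ r * a) a
  rw [ds_pow] at h2
  rw [show (2 ^ r + 1) * a = 2 ^ r * a + a by ring] at *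
  omega

theorem ds_B (k r a : ℕ) (ha : a < 2 ^ k - 1) : 2 * (Nat.digits 2 a).sum ≤
    (Nat.digits 2 ((2 ^ r + 1) * a % (2 ^ k - 1))).sum + k := by
  obtain ⟨b, hb⟩ : ∃ b, a + b + 1 = 2 ^ k := ⟨2 ^ k - 1 - a, by omega⟩
  have hc := ds_compl k a b hb
  have hA := ds_A k r b
  have hP := ds_mod k (2 ^ r * b)
  rw [ds_pow] at hP
  have hN : 2 ^ k - 1 = a + b := by omega
  generalize 2 ^ k - 1 = N at *
  have hsum : N ∣ (2 ^ r + 1) * a + (2 ^ r + 1) * b := ⟨2 ^ r + 1, by rw [hN]; ring⟩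
  have hz := Nat.mod_lt ((2 ^ r + 1) * a) (show 0 < N by omega)
  have hw := Nat.mod_lt ((2 ^ r + 1) * b) (show 0 < N by omega)
  by_cases h0 : (2 ^ r + 1) * a % N = 0
  · have e : 2 ^ r * b % N = a := by
      rw [← Nat.mod_eq_of_lt ha]
      have : 2 ^ r * b + (2 ^ r + 1) * a ≡ a + 0 [MOD N] := by
        rw [show 2 ^ r * b + (2 ^ r + 1) * a = a + N * 2 ^ r by rw [hN]; ring]
        simp [Nat.ModEq]
      exact Nat.ModEq.add_right_cancel (show (2 ^ r + 1) * a ≡ 0 [MOD N] by simpa [Nat.ModEq] using h0) this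
    rw [e] at hP; omega
  · have hs := Nat.mod_eq_zero_of_dvd hsum
    rw [Nat.add_mod] at hs
    generalize (2 ^ r + 1) * a % N = z at *
    generalize (2 ^ r + 1) * b % N = w at *
    have hzw : z + w = N := by
      obtain ⟨q, hq⟩ := Nat.dvd_of_mod_eq_zero hs
      have : q = 1 := by
        have h1 : 0 < q := by
          rcases Nat.eq_zero_or_pos q with rfl | h
          · omega
          · exact h
        have h2 : q < 2 := by
          by_contra h
          have : N * 2 ≤ N * q := Nat.mul_le_mul_left _ (by omega)
          omega
        omega
      subst this; omega
    have := ds_compl k z w (by omega)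
    omega

/-- For every positive integer `r` and every rational `x` with odd denominator,
`V((2^r + 1)x) ≤ 2 V(x) ≤ V((2^r + 1)x) + 1`. -/
theorem stmt_2 (V : ℚ → ℚ) (hV : IsV2 V) (r : ℕ) (hr : 0 < r)
    (x : ℚ) (hx : Odd x.den) :
    V (((2 : ℚ) ^ r + 1) * x) ≤ 2 * V x ∧
      2 * V x ≤ V (((2 : ℚ) ^ r + 1) * x) + 1 := by
  obtain ⟨k, hk, d, hd⟩ : ∃ k, 0 < k ∧ x.den ∣ 2 ^ k - 1 :=
    ⟨x.den.totient, Nat.totient_pos.2 x.den_pos,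
      (Nat.modEq_iff_dvd' Nat.one_le_two_pow).1
        (Nat.ModEq.pow_totient (Nat.coprime_two_left.2 hx)).symm⟩
  have h2 : 2 ≤ 2 ^ k := by
    calc 2 = 2 ^ 1 := by norm_num
      _ ≤ 2 ^ k := Nat.pow_le_pow_right (by norm_num) (by omega)
  have hNpos : 0 < 2 ^ k - 1 := by omega
  have hcast : ((2 : ℚ) ^ k - 1) = ((2 ^ k - 1 : ℕ) : ℚ) := by
    rw [Nat.cast_sub (by omega)]; simp
  have key : ∀ (y : ℚ) (c : ℕ), (∃ z : ℤ, y - (c : ℚ) / ((2 ^ k - 1 : ℕ) : ℚ) = z) →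
      V y = ((Nat.digits 2 (c % (2 ^ k - 1))).sum : ℚ) / (k : ℚ) := by
    rintro y c ⟨z, hz⟩
    apply hV y k _ hk (Nat.mod_lt _ hNpos)
    rw [hcast]
    have hm := Nat.div_add_mod c (2 ^ k - 1)
    have hN0 : ((2 ^ k - 1 : ℕ) : ℚ) ≠ 0 := by exact_mod_cast hNpos.ne'
    generalize 2 ^ k - 1 = N at *
    generalize c / N = q at hm
    generalize c % N = t at *
    refine ⟨z + (q : ℤ), ?_⟩
    have hm' : (N : ℚ) * q + t = c := by exact_mod_cast hm
    rw [Int.cast_add, ← hz, ← hm', Int.cast_natCast]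
    field_simp
    ring
  have hN0 : ((2 ^ k - 1 : ℕ) : ℚ) ≠ 0 := by exact_mod_cast hNpos.ne'
  obtain ⟨a, ha, z, hz⟩ : ∃ a : ℕ, a < 2 ^ k - 1 ∧
      ∃ z : ℤ, x - (a : ℚ) / ((2 ^ k - 1 : ℕ) : ℚ) = z := by
    generalize 2 ^ k - 1 = N at *
    have hNz : (0 : ℤ) < N := by exact_mod_cast hNpos
    have h1 := Int.emod_nonneg (x.num * d) hNz.ne'
    have h2 := Int.emod_lt_of_pos (x.num * d) hNz
    have h3 := Int.mul_ediv_add_emod (x.num * d) N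
    obtain ⟨a, ha⟩ := Int.eq_ofNat_of_zero_le h1
    refine ⟨a, by omega, x.num * d / N, ?_⟩
    rw [ha] at h3
    generalize x.num * d / (N : ℤ) = q at *
    have h4 : (N : ℚ) * q + a = x.num * d := by exact_mod_cast h3
    have h5 : (N : ℚ) = x.den * d := by exact_mod_cast hd
    have h6 : x * x.den = x.num := Rat.mul_den_eq_num x
    field_simp
    rw [← h6] at h4
    have : x * N = x * x.den * d := by rw [h5]; ring
    linarith
  have e1 := key x a ⟨z, hz⟩
  rw [Nat.mod_eq_of_lt ha] at e1
  have e2 := key (((2 : ℚ) ^ r + 1) * x) ((2 ^ r + 1) * a) ⟨(2 ^ r + 1) * z, by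
    push_cast [← hz]; ring⟩
  have hA : (((Nat.digits 2 ((2 ^ r + 1) * a % (2 ^ k - 1))).sum : ℕ) : ℚ)
    ≤ 2 * ((Nat.digits 2 a).sum : ℕ) := by exact_mod_cast ds_A k r a
  have hB : 2 * (((Nat.digits 2 a).sum : ℕ) : ℚ) ≤
    ((Nat.digits 2 ((2 ^ r + 1) * a % (2 ^ k - 1))).sum : ℕ) + (k : ℚ) := by
    exact_mod_cast ds_B k r a ha
  rw [e1, e2]
  have hkq : (0 : ℚ) < k := by exact_mod_cast hk
  constructor
  · rw [← mul_div_assoc]; gcongr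
  · rw [← mul_div_assoc, div_add_one hkq.ne']; gcongr
end

section
/- For every positive integer r and every rational number x with odd denominator, if V((2^r + 1)·x) = 0 then V(x) = 0 or V(x) = 1/2. -/
theorem dsum_rec (n : ℕ) (e : ℕ) (he : e < 2) :
    (Nat.digits 2 (2 * n + e)).sum = (Nat.digits 2 n).sum + e := by
  rcases Nat.eq_zero_or_pos (2 * n + e) with h0 | h0
  · have h1 : n = 0 := by omega
    have h2 : e = 0 := by omega
    subst h1 h2
    simp
  · rw [Nat.digits_def' (by norm_num) h0]
    have h1 : (2 * n + e) % 2 = e := by omega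
    have h2 : (2 * n + e) / 2 = n := by omega
    rw [h1, h2, List.sum_cons, Nat.add_comm]

theorem dsum_compl (c : ℕ) : ∀ (r m b : ℕ), m + b + 1 = 2 ^ r →
    (Nat.digits 2 (c * 2 ^ r + b)).sum + (Nat.digits 2 m).sum = (Nat.digits 2 c).sum + r := by
  intro r
  induction r with
  | zero =>
    intro m b h
    have h1 : m = 0 := by omega
    have h2 : b = 0 := by omega
    subst h1 h2
    simp
  | succ r ih =>
    intro m b h
    rw [pow_succ] at h
    have hb : c * 2 ^ (r + 1) + b = 2 * (c * 2 ^ r + b / 2) + b % 2 := by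
      have := Nat.div_add_mod b 2
      rw [pow_succ]
      linarith
    have hm : m = 2 * (m / 2) + m % 2 := by omega
    have := ih (m / 2) (b / 2) (by omega)
    rw [hb, dsum_rec _ _ (by omega), hm, dsum_rec _ _ (by omega)]
    omega

theorem dsum_zero (n : ℕ) (h : (Nat.digits 2 n).sum = 0) : n = 0 := by
  induction n using Nat.strong_induction_on with
  | _ n ih =>
    by_contra hn
    have hm : n = 2 * (n / 2) + n % 2 := by omega
    rw [hm, dsum_rec _ _ (by omega)] at h
    have := ih (n / 2) (by omega) (by omega)
    omega

/-- For every positive integer `r` and every rational `x` with odd denominator,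
if `V((2^r + 1)x) = 0` then `V(x) = 0` or `V(x) = 1/2`. -/
theorem stmt_3 (V : ℚ → ℚ) (hV : IsV2 V) (r : ℕ) (hr : 0 < r)
    (x : ℚ) (hx : Odd x.den) (h : V (((2 : ℚ) ^ r + 1) * x) = 0) :
    V x = 0 ∨ V x = 1 / 2 := by
  set d := x.den with hd
  have hd0 : 0 < d := x.den_pos
  have hk : 0 < d.totient := Nat.totient_pos.2 hd0
  obtain ⟨k, hkd⟩ : ∃ k, k = d.totient := ⟨_, rfl⟩
  rw [← hkd] at hk
  have hcop : Nat.Coprime 2 d := (Nat.coprime_two_left).2 hx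
  have hdvd : d ∣ 2 ^ k - 1 := by
    rw [hkd]
    exact (Nat.modEq_iff_dvd' Nat.one_le_two_pow).1 (Nat.ModEq.pow_totient hcop).symm
  obtain ⟨m, hm⟩ := hdvd
  have h2k : 2 ≤ 2 ^ k := by
    calc 2 = 2 ^ 1 := rfl
      _ ≤ 2 ^ k := Nat.pow_le_pow_right (by norm_num) hk
  obtain ⟨N, hN⟩ : ∃ N : ℕ, N = 2 ^ k - 1 := ⟨_, rfl⟩
  have hN0 : 0 < N := by omega
  have hNq : (2 : ℚ) ^ k - 1 = (N : ℚ) := by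
    have : N + 1 = 2 ^ k := by omega
    have h' : (N : ℚ) + 1 = 2 ^ k := by exact_mod_cast this
    linarith
  rw [← hN] at hm
  have hNqpos : (N : ℚ) ≠ 0 := by positivity
  have hdq : (d : ℚ) ≠ 0 := by positivity
  have hxN : x * N = x.num * m := by
    have h1 : x * d = x.num := Rat.mul_den_eq_num x
    rw [hm]; push_cast
    rw [← mul_assoc, h1]
  obtain ⟨t, ht⟩ : ∃ t : ℤ, t = (2 ^ r + 1) * (x.num * m) := ⟨_, rfl⟩
  have hyt : ((2 : ℚ) ^ r + 1) * x * N = t := by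
    rw [ht]; push_cast; rw [mul_assoc, hxN]
  have hNz : (0 : ℤ) < N := by exact_mod_cast hN0
  have hmod0 := Int.emod_nonneg t hNz.ne'
  have hmodlt := Int.emod_lt_of_pos t hNz
  obtain ⟨a, ha⟩ := Int.eq_ofNat_of_zero_le hmod0
  have haN : a < N := by omega
  have hdm := Int.emod_add_mul_ediv t N
  rw [ha] at hdm
  have hdmq : (a : ℚ) + N * ((t / (N : ℤ) : ℤ) : ℚ) = t := by exact_mod_cast hdm
  have hVy := hV (((2 : ℚ) ^ r + 1) * x) k a hk (by omega) ⟨t / N, by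
    rw [hNq]
    field_simp
    linarith⟩
  have hkq : (k : ℚ) ≠ 0 := by positivity
  rw [h, eq_comm, div_eq_zero_iff] at hVy
  have hs : (Nat.digits 2 a).sum = 0 := by
    rcases hVy with h1 | h1
    · exact_mod_cast h1
    · exact absurd h1 hkq
  have ha0 := dsum_zero a hs
  subst ha0
  obtain ⟨q, hq⟩ : ∃ q : ℤ, q = t / (N : ℤ) := ⟨_, rfl⟩
  rw [← hq] at hdmq
  have hxq : ((2 : ℚ) ^ r + 1) * x = q := by
    apply mul_right_cancel₀ hNqpos
    rw [hyt, ← hdmq]; push_cast; ring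
  clear hdmq hVy hdm hq
  -- reduce q mod 2^r+1
  obtain ⟨M, hM⟩ : ∃ M : ℕ, M = 2 ^ r + 1 := ⟨_, rfl⟩
  have hMz : (0 : ℤ) < M := by rw [hM]; positivity
  have hMq : (2 : ℚ) ^ r = (M : ℚ) - 1 := by rw [hM]; push_cast; ring
  have hM0 : (M : ℚ) ≠ 0 := by exact_mod_cast hMz.ne'
  have hj0 := Int.emod_nonneg q hMz.ne'
  have hjlt := Int.emod_lt_of_pos q hMz
  obtain ⟨j, hj⟩ := Int.eq_ofNat_of_zero_le hj0
  have hjM : j < M := by omega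
  have hdj := Int.emod_add_mul_ediv q M
  rw [hj] at hdj
  have hdjq : (j : ℚ) + M * ((q / (M : ℤ) : ℤ) : ℚ) = q := by exact_mod_cast hdj
  obtain ⟨p, hp⟩ : ∃ p : ℤ, p = q / (M : ℤ) := ⟨_, rfl⟩
  rw [← hp] at hdjq
  have hxM : (M : ℚ) * x = j + M * p := by
    rw [hdjq, ← hxq, hMq]; ring
  have h2r : 2 ≤ 2 ^ r := by
    calc 2 = 2 ^ 1 := rfl
      _ ≤ 2 ^ r := Nat.pow_le_pow_right (by norm_num) hr
  rcases Nat.eq_zero_or_pos j with hjz | hjp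
  · left
    subst hjz
    have := hV x 1 0 (by norm_num) (by norm_num) ⟨p, by
      have : x = p := by
        apply mul_left_cancel₀ hM0
        rw [hxM]; push_cast; ring
      rw [this]; simp⟩
    simpa using this
  · right
    obtain ⟨c, rfl⟩ : ∃ c, j = c + 1 := ⟨j - 1, by omega⟩
    obtain ⟨b, hb⟩ : ∃ b, c + b + 1 = 2 ^ r := ⟨2 ^ r - 1 - c, by omega⟩
    have hsum := dsum_compl c r c b hb
    have hbq : (c : ℚ) + b + 1 = M - 1 := by rw [← hMq]; exact_mod_cast hb
    have hM2 : (2 : ℚ) ≤ M - 1 := by rw [← hMq]; exact_mod_cast h2r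
    have hlt : c * 2 ^ r + b < 2 ^ (2 * r) - 1 := by
      have : 2 ^ (2 * r) = 2 ^ r * 2 ^ r := by rw [two_mul, pow_add]
      rw [this]
      apply Nat.lt_sub_of_add_lt
      rw [← hb] at h2r ⊢
      have hb1 : c + 1 ≤ c + b + 1 := by omega
      rcases Nat.eq_zero_or_pos b with hb0 | hb0
      · subst hb0; nlinarith
      · nlinarith
    have hres := hV x (2 * r) (c * 2 ^ r + b) (by omega) hlt ⟨p, by
      have hx' : x = (c + 1) / M + p := by
        apply mul_left_cancel₀ hM0
        rw [hxM]; push_cast; field_simp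
      have h4 : (2 : ℚ) ^ (2 * r) - 1 = M * (M - 2) := by
        rw [two_mul, pow_add, hMq]; ring
      have h5 : (M : ℚ) - 2 ≠ 0 := by
        intro h0; linarith
      have hbe : (b : ℚ) = M - 2 - c := by linarith
      rw [h4, hx']
      push_cast
      rw [hMq, hbe]
      field_simp
      ring⟩
    have hsr : (Nat.digits 2 (c * 2 ^ r + b)).sum = r := by omega
    rw [hres, hsr]
    have : (r : ℚ) ≠ 0 := by positivity
    push_cast
    field_simp
end

section
/- For every positive integer r and every rational number x with odd denominator, the quantity V((2^r + 1)·x) − V(x) lies in the half-open interval [−1/2, 1/2). Moreover, V((2^r + 1)·x) − V(x) = −1/2 if and only if there exists an integer i not divisible by 2^r + 1 such that x − i/(2^r + 1) is an integer. -/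
theorem aux_dig (k : ℕ) : ∀ a : ℕ, a < 2 ^ k →
    (Nat.digits 2 a).sum + ∑ i ∈ Finset.range k, a / 2 ^ (i + 1) = a := by
  induction k with
  | zero => intro a ha; have : a = 0 := by simpa using ha
            subst this; simp
  | succ k ih =>
    intro a ha
    rcases Nat.eq_zero_or_pos a with h0 | h0
    · subst h0; simp
    · have h1 := ih (a / 2) (by rw [pow_succ] at ha; omega)
      rw [Nat.digits_def' (by norm_num) h0, Finset.sum_range_succ', List.sum_cons]
      have h2 : ∀ i ∈ Finset.range k, a / 2 ^ (i + 1 + 1) = a / 2 / 2 ^ (i + 1) := by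
        intro i _
        rw [Nat.div_div_eq_div_mul, pow_succ' 2 (i + 1)]
      rw [Finset.sum_congr rfl h2]
      simp only [zero_add, pow_one]
      omega

theorem aux_floor (k j a : ℕ) (hj : j ≤ k) (ha : a < 2 ^ k - 1) :
    ⌊(2 : ℚ) ^ j * ((a : ℚ) / ((2 : ℚ) ^ k - 1))⌋ = ((a / 2 ^ (k - j) : ℕ) : ℤ) := by
  obtain ⟨m, rfl⟩ := Nat.exists_eq_add_of_le hj
  rw [Nat.add_sub_cancel_left]
  have ha' : a + 1 < 2 ^ (j + m) := by omega
  have haq : (a : ℚ) + 1 < 2 ^ (j + m) := by exact_mod_cast ha'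
  have hN : (0 : ℚ) < 2 ^ (j + m) - 1 := by
    have : (0 : ℚ) ≤ a := Nat.cast_nonneg a
    linarith
  set q := a / 2 ^ m with hq
  have h1 : q * 2 ^ m ≤ a := Nat.div_mul_le_self a _
  have h2 : a + 1 ≤ (q + 1) * 2 ^ m := by
    have := Nat.lt_div_mul_add (a := a) (b := 2 ^ m) (by positivity)
    rw [add_mul, one_mul]; exact this
  have h1q : (q : ℚ) * 2 ^ m ≤ a := by exact_mod_cast h1
  have h2q : (a : ℚ) + 1 ≤ (q + 1) * 2 ^ m := by exact_mod_cast h2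
  have hJ : (0 : ℚ) < 2 ^ j := by positivity
  have hM : (0 : ℚ) < 2 ^ m := by positivity
  have hq0 : (0 : ℚ) ≤ q := Nat.cast_nonneg q
  rw [Int.floor_eq_iff, ← mul_div_assoc, le_div_iff₀ hN, div_lt_iff₀ hN]
  push_cast
  rw [pow_add] at *
  constructor
  · nlinarith [mul_le_mul_of_nonneg_left h1q hJ.le]
  · have h3 := mul_le_mul_of_nonneg_left h2q hJ.le
    have h4 : (q : ℚ) + 1 ≤ 2 ^ j := by
      have : q < 2 ^ j := by
        rw [hq]; apply Nat.div_lt_of_lt_mul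
        rw [mul_comm]; omega
      exact_mod_cast this
    by_contra hcon
    push Not at hcon
    have h5 : (q : ℚ) + 1 = 2 ^ j := by nlinarith
    rw [h5] at hcon h2q
    nlinarith

theorem aux_V_s4 (V : ℚ → ℚ) (hV : IsV2 V) (k : ℕ) (hk : 0 < k) (x : ℚ) (n : ℤ)
    (hn : ((2 : ℚ) ^ k - 1) * x = n) :
    V x = (∑ j ∈ Finset.range k, Int.fract ((2 : ℚ) ^ j * x)) / k := by
  have hN : (0 : ℚ) < 2 ^ k - 1 := by
    have : (1 : ℚ) < 2 ^ k := one_lt_pow₀ (by norm_num) hk.ne'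
    linarith
  obtain ⟨b, hb⟩ : ∃ b : ℤ, ((2 : ℚ) ^ k - 1) * Int.fract x = b := by
    refine ⟨n - (2 ^ k - 1) * ⌊x⌋, ?_⟩
    rw [Int.fract, mul_sub, hn]; push_cast; ring
  have hb0 : 0 ≤ b := by
    have : (0 : ℚ) ≤ b := by rw [← hb]; exact mul_nonneg hN.le (Int.fract_nonneg x)
    exact_mod_cast this
  obtain ⟨a, rfl⟩ := Int.eq_ofNat_of_zero_le hb0
  have ha : a < 2 ^ k - 1 := by
    have h : (a : ℚ) < 2 ^ k - 1 := by
      have := mul_lt_mul_of_pos_left (Int.fract_lt_one x) hN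
      rw [hb] at this; simpa using this
    have h' : (a : ℚ) + 1 < 2 ^ k := by linarith
    have : a + 1 < 2 ^ k := by exact_mod_cast h'
    omega
  have hf : Int.fract x = (a : ℚ) / (2 ^ k - 1) := by
    rw [eq_div_iff hN.ne', mul_comm, hb]; simp
  rw [hV x k a hk ha ⟨⌊x⌋, by rw [← hf, Int.self_sub_fract]⟩]
  congr 1
  have h1 : ∀ j ∈ Finset.range k, Int.fract ((2 : ℚ) ^ j * x)
      = 2 ^ j * ((a : ℚ) / (2 ^ k - 1)) - ((a / 2 ^ (k - 1 - j + 1) : ℕ) : ℚ) := by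
    intro j hj
    rw [Finset.mem_range] at hj
    have e : (2 : ℚ) ^ j * x = 2 ^ j * Int.fract x + ((2 ^ j * ⌊x⌋ : ℤ) : ℚ) := by
      rw [Int.fract]; push_cast; ring
    have e2 : k - 1 - j + 1 = k - j := by omega
    rw [e, Int.fract_add_intCast, Int.fract, hf, aux_floor k j a hj.le ha, e2, Int.cast_natCast]
  rw [Finset.sum_congr rfl h1, Finset.sum_sub_distrib, ← Finset.sum_mul, geom_sum_eq (by norm_num),
    Finset.sum_range_reflect (fun i => ((a / 2 ^ (i + 1) : ℕ) : ℚ)) k]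
  have h2 := aux_dig k a (by omega)
  have h3 : (((Nat.digits 2 a).sum : ℕ) : ℚ) + ∑ i ∈ Finset.range k, ((a / 2 ^ (i + 1) : ℕ) : ℚ) = a := by
    exact_mod_cast h2
  have h4 : ((2 : ℚ) ^ k - 1) / (2 - 1) * ((a : ℚ) / (2 ^ k - 1)) = a := by
    field_simp; norm_num
  rw [h4]; linarith

theorem aux_shift (k : ℕ) (x : ℚ) (n : ℤ) (hn : ((2 : ℚ) ^ k - 1) * x = n) (r : ℕ) :
    ∑ j ∈ Finset.range k, Int.fract ((2 : ℚ) ^ (j + r) * x)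
      = ∑ j ∈ Finset.range k, Int.fract ((2 : ℚ) ^ j * x) := by
  induction r with
  | zero => rfl
  | succ r ih =>
    rw [← ih]
    have h1 := Finset.sum_range_succ (fun j => Int.fract ((2 : ℚ) ^ (j + r) * x)) k
    rw [Finset.sum_range_succ'] at h1
    have h2 : Int.fract ((2 : ℚ) ^ (k + r) * x) = Int.fract ((2 : ℚ) ^ (0 + r) * x) := by
      have : (2 : ℚ) ^ (k + r) * x = 2 ^ (0 + r) * x + ((2 ^ r * n : ℤ) : ℚ) := by
        push_cast; rw [← hn, pow_add]; ring
      rw [this, Int.fract_add_intCast]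
    rw [h2] at h1
    have h3 := add_right_cancel h1
    rw [← h3]
    refine Finset.sum_congr rfl fun j _ => ?_
    rw [add_right_comm, add_assoc]

theorem aux_k (x : ℚ) (hx : Odd x.den) :
    ∃ k : ℕ, 0 < k ∧ ∃ n : ℤ, ((2 : ℚ) ^ k - 1) * x = n := by
  refine ⟨x.den.totient, Nat.totient_pos.2 x.den_pos, ?_⟩
  have h := Nat.ModEq.pow_totient (Nat.coprime_two_left.2 hx)
  have h2 := (Nat.modEq_iff_dvd.1 h.symm)
  obtain ⟨c, hc⟩ := h2
  refine ⟨c * x.num, ?_⟩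
  have hcq : (2 : ℚ) ^ x.den.totient - 1 = x.den * c := by exact_mod_cast hc
  rw [hcq]
  have := Rat.mul_den_eq_num x
  push_cast
  rw [← this]; ring

theorem aux_term (u v : ℚ) :
    -1 ≤ 2 * Int.fract (u + v) - Int.fract u - Int.fract v ∧
    2 * Int.fract (u + v) - Int.fract u - Int.fract v < 1 ∧
    (2 * Int.fract (u + v) - Int.fract u - Int.fract v = -1 ↔
      Int.fract (u + v) = 0 ∧ Int.fract u ≠ 0) := by
  have a1 := Int.fract_nonneg u
  have a2 := Int.fract_lt_one u
  have b1 := Int.fract_nonneg v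
  have b2 := Int.fract_lt_one v
  have c1 := Int.fract_nonneg (u + v)
  have c2 := Int.fract_lt_one (u + v)
  obtain ⟨z, hz⟩ := Int.fract_add u v
  have z1 : (-2 : ℚ) < z := by linarith
  have z2 : (z : ℚ) < 1 := by linarith
  have z1' : -2 < z := by exact_mod_cast z1
  have z2' : z < 1 := by exact_mod_cast z2
  have : z = -1 ∨ z = 0 := by omega
  rcases this with rfl | rfl
  · push_cast at hz
    refine ⟨by linarith, by linarith, fun h => ⟨by linarith, fun h0 => by linarith⟩, fun h => by linarith [h.1]⟩
  · push_cast at hz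
    refine ⟨by linarith, by linarith, fun h => by linarith, fun h => ?_⟩
    exact absurd (by linarith [h.1] : Int.fract u = 0) h.2

theorem aux_int (x : ℚ) (hx : Odd x.den) (j : ℕ) (h : Int.fract ((2 : ℚ) ^ j * x) = 0) :
    Int.fract x = 0 := by
  obtain ⟨z, hz⟩ := Int.fract_eq_zero_iff.1 h
  have h1 : (2 ^ j * x.num : ℤ) = z * x.den := by
    have := Rat.mul_den_eq_num x
    have h2 : (2 : ℚ) ^ j * x.num = z * x.den := by rw [← this, hz]; ring
    exact_mod_cast h2
  have h2 : x.den ∣ 2 ^ j * x.num.natAbs := by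
    have : (x.den : ℤ) ∣ 2 ^ j * x.num := ⟨z, by rw [h1]; ring⟩
    have := Int.natAbs_dvd_natAbs.2 this
    simpa [Int.natAbs_mul, Int.natAbs_pow] using this
  have h3 : x.den ∣ 2 ^ j := x.reduced.symm.dvd_of_dvd_mul_right h2
  have h4 : x.den = 1 := by
    have : Nat.Coprime x.den (2 ^ j) := (Nat.coprime_two_right.2 hx).pow_right j
    exact Nat.Coprime.eq_one_of_dvd this h3
  exact Int.fract_eq_zero_iff.2 ⟨x.num, (Rat.den_eq_one_iff x).1 h4⟩

/-- For every positive integer `r` and every rational `x` with odd denominator,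
`V((2^r+1)x) - V(x) ∈ [-1/2, 1/2)`, with equality `= -1/2` iff `x ≡ i/(2^r+1) (mod ℤ)`
for some integer `i` not divisible by `2^r + 1`. -/
theorem stmt_4 (V : ℚ → ℚ) (hV : IsV2 V) (r : ℕ) (hr : 0 < r)
    (x : ℚ) (hx : Odd x.den) :
    V (((2 : ℚ) ^ r + 1) * x) - V x ∈ Set.Ico (-(1 / 2) : ℚ) (1 / 2) ∧
      (V (((2 : ℚ) ^ r + 1) * x) - V x = -(1 / 2) ↔
        ∃ i : ℤ, ¬ ((2 ^ r + 1 : ℤ) ∣ i) ∧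
          ∃ z : ℤ, x - (i : ℚ) / ((2 : ℚ) ^ r + 1) = (z : ℚ)) := by
  obtain ⟨k, hk, n, hn⟩ := aux_k x hx
  have hkq : (0 : ℚ) < k := by exact_mod_cast hk
  have hy : ((2 : ℚ) ^ k - 1) * (((2 : ℚ) ^ r + 1) * x) = (((2 ^ r + 1) * n : ℤ) : ℚ) := by
    push_cast; rw [← hn]; ring
  set T : ℕ → ℚ := fun j => 2 * Int.fract ((2 : ℚ) ^ j * x + 2 ^ (j + r) * x)
    - Int.fract ((2 : ℚ) ^ j * x) - Int.fract ((2 : ℚ) ^ (j + r) * x) with hT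
  have hD : V (((2 : ℚ) ^ r + 1) * x) - V x = (∑ j ∈ Finset.range k, T j) / (2 * k) := by
    rw [aux_V_s4 V hV k hk _ _ hy, aux_V_s4 V hV k hk _ _ hn, hT]
    simp only [Finset.sum_sub_distrib, aux_shift k x n hn r, ← Finset.mul_sum]
    have : ∀ j, (2 : ℚ) ^ j * ((2 ^ r + 1) * x) = 2 ^ j * x + 2 ^ (j + r) * x := by
      intro j; rw [pow_add]; ring
    simp only [this]
    field_simp
    ring
  have hne : (Finset.range k).Nonempty := Finset.nonempty_range_iff.2 hk.ne'
  have hlo : ∀ j ∈ Finset.range k, -1 ≤ T j := fun j _ => (aux_term _ _).1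
  have hS1 : -(k : ℚ) ≤ ∑ j ∈ Finset.range k, T j := by
    have := Finset.sum_le_sum hlo
    simpa using this
  have hS2 : ∑ j ∈ Finset.range k, T j < k := by
    have := Finset.sum_lt_sum_of_nonempty hne (f := T) (g := fun _ => 1)
      (fun j _ => (aux_term _ _).2.1)
    simpa using this
  have hr0 : (0 : ℚ) < 2 ^ r + 1 := by positivity
  rw [hD]
  refine ⟨⟨?_, ?_⟩, ?_⟩
  · rw [le_div_iff₀ (by positivity)]; linarith
  · rw [div_lt_iff₀ (by positivity)]; linarith
  rw [div_eq_iff (by positivity)]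
  have e1 : (∑ j ∈ Finset.range k, T j = -(1 / 2) * (2 * k)) ↔ ∀ j ∈ Finset.range k, T j = -1 := by
    have := Finset.sum_eq_sum_iff_of_le hlo
    have e2 : ∑ j ∈ Finset.range k, (-1 : ℚ) = -(1 / 2) * (2 * k) := by simp
    rw [e2] at this
    rw [eq_comm, this]
    simp only [eq_comm]
  rw [e1]
  constructor
  · intro h
    have h0 := (aux_term _ _).2.2.1 (h 0 (Finset.mem_range.2 hk))
    simp only [pow_zero, one_mul, zero_add] at h0
    obtain ⟨h1, h2⟩ := h0
    obtain ⟨i, hi⟩ := Int.fract_eq_zero_iff.1 h1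
    have hi' : x = i / (2 ^ r + 1) := by rw [eq_div_iff hr0.ne', hi]; ring
    refine ⟨i, ?_, 0, by rw [← hi']; simp⟩
    rintro ⟨c, rfl⟩
    apply h2
    rw [Int.fract_eq_zero_iff]
    refine ⟨c, ?_⟩
    rw [hi']; push_cast; field_simp
  · rintro ⟨i, hi, z, hz⟩ j _
    have hx' : (2 ^ r + 1) * x = ((i + (2 ^ r + 1) * z : ℤ) : ℚ) := by
      push_cast; rw [← hz]; field_simp; ring
    refine (aux_term _ _).2.2.2 ⟨?_, fun h => ?_⟩
    · rw [Int.fract_eq_zero_iff]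
      refine ⟨2 ^ j * (i + (2 ^ r + 1) * z), ?_⟩
      rw [Int.cast_mul, ← hx', pow_add]; push_cast; ring
    · obtain ⟨w, hw⟩ := Int.fract_eq_zero_iff.1 (aux_int x hx j h)
      apply hi
      rw [← hw] at hx'
      have : (2 ^ r + 1) * w = i + (2 ^ r + 1) * z := by exact_mod_cast hx'
      exact ⟨w - z, by linarith⟩
end

section
/- Let r_1 and r_2 be positive integers such that gcd(2^{r_1} + 1, 2^{r_2} + 1) = 1, and let x be a rational number with odd denominator. Then V(2; r_1, r_2; x) = V((2^{r_1}+1)(2^{r_2}+1)·x) − V((2^{r_1}+1)·x) − V((2^{r_2}+1)·x) + V(x) lies in the half-open interval [−3/4, 3/4). Moreover, V(2; r_1, r_2; x) = −3/4 if and only if (2^{r_1}+1)(2^{r_2}+1)·x is an integer and V(x) = 1/4. -/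
def SS (k : ℕ) (y : ℚ) : ℚ := ∑ i ∈ Finset.range k, Int.fract ((2:ℚ) ^ i * y)

lemma digits_sum_aux (k a : ℕ) (hk : 0 < k) (ha : a < 2 ^ k - 1) :
    ((Nat.digits 2 a).sum : ℚ) = SS k ((a : ℚ) / ((2 : ℚ) ^ k - 1)) := by
  have h1 : (Nat.digits 2 a).sum + ∑ j ∈ Finset.range k, a / 2 ^ (j + 1) = a := by
    rcases Nat.eq_zero_or_pos a with rfl | hpos
    · simp
    have hle := Nat.digit_sum_le 2 a
    have h := Nat.sub_one_mul_sum_log_div_pow_eq_sub_sum_digits (p := 2) a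
    have hlog : Nat.log 2 a < k := Nat.log_lt_of_lt_pow hpos.ne' (by omega)
    have hs : ∑ j ∈ Finset.range (Nat.log 2 a).succ, a / 2 ^ (j + 1)
        = ∑ j ∈ Finset.range k, a / 2 ^ (j + 1) := by
      apply Finset.sum_subset
      · intro i; simp; omega
      · intro i _ hi
        simp at hi
        apply Nat.div_eq_of_lt
        have := Nat.lt_pow_succ_log_self (b := 2) (by norm_num) a
        refine this.trans_le (Nat.pow_le_pow_right (by norm_num) (by omega))
    have h' : ∑ j ∈ Finset.range (Nat.log 2 a).succ, a / 2 ^ (j + 1) = a - (Nat.digits 2 a).sum := by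
      simpa using h
    omega
  have hN : (1:ℚ) < 2 ^ k := one_lt_pow₀ (by norm_num) hk.ne'
  have haq : (a:ℚ) + 1 < 2 ^ k := by
    have : a + 1 < 2 ^ k := by omega
    exact_mod_cast this
  have h2 : ∀ j ∈ Finset.range k, Int.fract ((2:ℚ) ^ (k - 1 - j) * ((a : ℚ) / ((2 : ℚ) ^ k - 1)))
      = (2:ℚ) ^ (k - 1 - j) * ((a : ℚ) / ((2 : ℚ) ^ k - 1)) - ((a / 2 ^ (j + 1) : ℕ) : ℚ) := by
    intro j hj
    have hj : j < k := by simpa using hj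
    rw [Int.fract_eq_iff]
    obtain ⟨q, hq⟩ : ∃ q, q = a / 2 ^ (j + 1) := ⟨_, rfl⟩
    obtain ⟨m, hm⟩ : ∃ m, m = a % 2 ^ (j + 1) := ⟨_, rfl⟩
    have hdm : 2 ^ (j + 1) * q + m = a := by rw [hq, hm]; exact Nat.div_add_mod _ _
    have hmlt : m + 1 ≤ 2 ^ (j + 1) := by rw [hm]; exact Nat.mod_lt _ (by positivity)
    rw [← hq]
    have hpow : (2:ℚ) ^ (k - 1 - j) * 2 ^ (j + 1) = 2 ^ k := by
      rw [← pow_add]; congr 1; omega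
    have hdmq : (2:ℚ) ^ (j + 1) * q + m = a := by exact_mod_cast hdm
    have hmq : (m:ℚ) + 1 ≤ 2 ^ (j + 1) := by exact_mod_cast hmlt
    have hval : (2:ℚ) ^ (k - 1 - j) * ((a : ℚ) / ((2 : ℚ) ^ k - 1)) - q
        = (2 ^ (k - 1 - j) * m + q) / (2 ^ k - 1) := by
      have : (2:ℚ) ^ k - 1 ≠ 0 := by linarith
      field_simp
      rw [← hdmq, ← hpow]; ring
    rw [hval]
    have hP : (1:ℚ) ≤ 2 ^ (k - 1 - j) := one_le_pow₀ (by norm_num)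
    have hR : (1:ℚ) ≤ 2 ^ (j + 1) := one_le_pow₀ (by norm_num)
    refine ⟨by apply div_nonneg; positivity; linarith, ?_, ⟨q, ?_⟩⟩
    · rw [div_lt_one (by linarith)]
      have hqP : (q:ℚ) + 1 ≤ 2 ^ (k - 1 - j) := by
        have : q < 2 ^ (k - 1 - j) := by
          rw [hq]; apply Nat.div_lt_of_lt_mul
          rw [← pow_add]
          have : j + 1 + (k - 1 - j) = k := by omega
          rw [this]; omega
        exact_mod_cast this
      by_contra hcon
      push Not at hcon
      generalize (2:ℚ) ^ (k - 1 - j) = P at *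
      generalize (2:ℚ) ^ (j + 1) = R at *
      rw [← hpow] at haq hcon
      have hPm : P * (m + 1) ≤ P * R := mul_le_mul_of_nonneg_left hmq (by linarith)
      have hqeq : (q:ℚ) + 1 = P := by linarith
      have hmeq : (m:ℚ) + 1 = R := by
        have : P * (R - (m + 1)) ≤ 0 := by linarith
        nlinarith
      rw [← hqeq, ← hmeq] at haq
      rw [← hmeq] at hdmq
      linarith
    · rw [← hval]; push_cast; ring
  unfold SS
  rw [← Finset.sum_range_reflect, Finset.sum_congr rfl h2, Finset.sum_sub_distrib]
  have h3 : ∑ j ∈ Finset.range k, (2:ℚ) ^ (k - 1 - j) * ((a : ℚ) / ((2 : ℚ) ^ k - 1)) = a := by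
    rw [← Finset.sum_mul, Finset.sum_range_reflect (fun i => (2:ℚ) ^ i), geom_sum_eq (by norm_num)]
    have : (2:ℚ) ^ k - 1 ≠ 0 := by linarith
    field_simp
    norm_num
  rw [h3]
  have h1q : (((Nat.digits 2 a).sum : ℕ) : ℚ) + ((∑ j ∈ Finset.range k, a / 2 ^ (j + 1) : ℕ) : ℚ) = a := by
    exact_mod_cast h1
  push_cast at h1q ⊢
  linarith

lemma V_eq (V : ℚ → ℚ) (hV : IsV2 V) (k : ℕ) (hk : 0 < k) (y : ℚ) (m : ℤ)
    (hm : ((2:ℚ) ^ k - 1) * y = m) : V y = SS k y / k := by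
  have hN : (1:ℚ) < 2 ^ k := one_lt_pow₀ (by norm_num) hk.ne'
  have hNz : (1:ℤ) < 2 ^ k := one_lt_pow₀ (by norm_num) hk.ne'
  have hNn : 1 < 2 ^ k := one_lt_pow₀ (by norm_num) hk.ne'
  obtain ⟨a, ha⟩ : ∃ a : ℕ, (a : ℤ) = m % (2 ^ k - 1) :=
    ⟨(m % (2 ^ k - 1)).toNat, Int.toNat_of_nonneg (Int.emod_nonneg _ (by omega))⟩
  have hlt : a < 2 ^ k - 1 := by
    have := Int.emod_lt_of_pos m (b := 2 ^ k - 1) (by omega)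
    rw [← ha] at this
    zify [hNn.le]; exact this
  have hdm : (a : ℤ) + (2 ^ k - 1) * (m / (2 ^ k - 1)) = m := by
    rw [ha]; exact Int.emod_add_mul_ediv _ _
  generalize hz : m / (2 ^ k - 1) = z at hdm
  have hdmq : (a : ℚ) + (2 ^ k - 1) * z = m := by exact_mod_cast hdm
  have hne : (2:ℚ) ^ k - 1 ≠ 0 := by linarith
  have hy : y = (a : ℚ) / ((2 : ℚ) ^ k - 1) + z := by
    field_simp
    linarith
  rw [hV y k a hk hlt ⟨z, by rw [hy]; ring⟩, digits_sum_aux k a hk hlt]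
  congr 1
  unfold SS
  apply Finset.sum_congr rfl
  intro i _
  rw [hy, mul_add]
  have : (2:ℚ) ^ i * z = ((2 ^ i * z : ℤ) : ℚ) := by push_cast; ring
  rw [this, Int.fract_add_intCast]

lemma SS_two (k : ℕ) (y : ℚ) (m : ℤ)
    (hm : ((2:ℚ) ^ k - 1) * y = m) : SS k (2 * y) = SS k y := by
  have h : SS k (2 * y) = ∑ i ∈ Finset.range k, Int.fract ((2:ℚ) ^ (i + 1) * y) := by
    unfold SS
    apply Finset.sum_congr rfl
    intro i _
    congr 1; ring
  have h2 := Finset.sum_range_succ' (fun i => Int.fract ((2:ℚ) ^ i * y)) k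
  rw [Finset.sum_range_succ] at h2
  have h3 : (2:ℚ) ^ k * y = y + m := by linarith
  rw [h3, Int.fract_add_intCast] at h2
  simp only [pow_zero, one_mul] at h2
  rw [h]
  unfold SS
  linarith

lemma SS_pow (k : ℕ) (r : ℕ) (y : ℚ) (m : ℤ)
    (hm : ((2:ℚ) ^ k - 1) * y = m) : SS k (2 ^ r * y) = SS k y := by
  induction r with
  | zero => simp
  | succ r ih =>
    rw [← ih, ← SS_two k (2 ^ r * y) (2 ^ r * m) (by push_cast; rw [← hm]; ring)]
    congr 1; ring

lemma fract_add_cases (a b : ℚ) : (Int.fract (a + b) = Int.fract a + Int.fract b ∧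
      Int.fract a + Int.fract b < 1) ∨
    (Int.fract (a + b) = Int.fract a + Int.fract b - 1 ∧ 1 ≤ Int.fract a + Int.fract b) := by
  obtain ⟨z, hz⟩ := Int.fract_add a b
  have h0 := Int.fract_nonneg (a + b)
  have h1 := Int.fract_lt_one (a + b)
  have h2 := Int.fract_nonneg a
  have h3 := Int.fract_lt_one a
  have h4 := Int.fract_nonneg b
  have h5 := Int.fract_lt_one b
  have hz1 : (-2:ℚ) < z := by linarith
  have hz2 : (z:ℚ) < 1 := by linarith
  have hz1' : -2 < z := by exact_mod_cast hz1
  have hz2' : z < 1 := by exact_mod_cast hz2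
  obtain rfl | rfl : z = 0 ∨ z = -1 := by omega
  · left; push_cast at hz; constructor <;> linarith
  · right; push_cast at hz; constructor <;> linarith

def GG (a b c d : ℚ) : ℚ := Int.fract (a + b + c + d)
    - (Int.fract (a + b) + Int.fract (c + d) + Int.fract (a + c) + Int.fract (b + d)) / 2
    + (Int.fract a + Int.fract b + Int.fract c + Int.fract d) / 4

lemma GG_bound (a b c d : ℚ) : -(3/4) ≤ GG a b c d ∧ GG a b c d < 3 / 4 ∧
    (GG a b c d = -(3/4) → Int.fract (a + b + c + d) = 0 ∧
      Int.fract a + Int.fract b + Int.fract c + Int.fract d = 1) := by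
  unfold GG
  have e := fract_add_cases (a + b) (c + d)
  rw [← add_assoc] at e
  have e1 := fract_add_cases a b
  have e2 := fract_add_cases c d
  have e3 := fract_add_cases a c
  have e4 := fract_add_cases b d
  have h0 := Int.fract_nonneg (a + b + c + d)
  have h1 := Int.fract_lt_one (a + b + c + d)
  have a0 := Int.fract_nonneg a
  have a1 := Int.fract_lt_one a
  have b0 := Int.fract_nonneg b
  have b1 := Int.fract_lt_one b
  have c0 := Int.fract_nonneg c
  have c1 := Int.fract_lt_one c
  have d0 := Int.fract_nonneg d
  have d1 := Int.fract_lt_one d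
  generalize Int.fract (a + b + c + d) = s at *
  generalize Int.fract (a + b) = s1 at *
  generalize Int.fract (c + d) = s2 at *
  generalize Int.fract (a + c) = s3 at *
  generalize Int.fract (b + d) = s4 at *
  generalize Int.fract a = u at *
  generalize Int.fract b = v at *
  generalize Int.fract c = w at *
  generalize Int.fract d = t at *
  rcases e with ⟨e, f⟩ | ⟨e, f⟩ <;> rcases e1 with ⟨e1, f1⟩ | ⟨e1, f1⟩ <;>
  rcases e2 with ⟨e2, f2⟩ | ⟨e2, f2⟩ <;> rcases e3 with ⟨e3, f3⟩ | ⟨e3, f3⟩ <;>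
  rcases e4 with ⟨e4, f4⟩ | ⟨e4, f4⟩ <;>
  refine ⟨by linarith, by linarith, fun h => ⟨by linarith, by linarith⟩⟩

lemma SS_add (k r : ℕ) (y : ℚ) (m : ℤ) (hm : ((2:ℚ) ^ k - 1) * y = m) :
    SS k y = (∑ i ∈ Finset.range k,
      (Int.fract ((2:ℚ) ^ i * y) + Int.fract ((2:ℚ) ^ i * (2 ^ r * y)))) / 2 := by
  rw [Finset.sum_add_distrib]
  change SS k y = (SS k y + SS k (2 ^ r * y)) / 2
  rw [SS_pow k r y m hm]; ring

lemma half (k r : ℕ) (hk : 0 < k) (y : ℚ) (m : ℤ) (hm : ((2:ℚ) ^ k - 1) * y = m)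
    (hi : ∃ z : ℤ, ((2:ℚ) ^ r + 1) * y = z) (hy : ¬ ∃ z : ℤ, y = z) : SS k y = k / 2 := by
  rw [SS_add k r y m hm]
  congr 1
  rw [Finset.sum_congr rfl (g := fun _ => (1:ℚ))]
  · simp
  intro i hik
  have hik : i < k := by simpa using hik
  obtain ⟨z, hz⟩ := hi
  have h1 : Int.fract ((2:ℚ) ^ i * y + (2:ℚ) ^ i * (2 ^ r * y)) = 0 := by
    have : (2:ℚ) ^ i * y + (2:ℚ) ^ i * (2 ^ r * y) = ((2 ^ i * z : ℤ) : ℚ) := by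
      push_cast; rw [← hz]; ring
    rw [this, Int.fract_intCast]
  have h2 : Int.fract ((2:ℚ) ^ i * y) ≠ 0 := by
    rw [Ne, Int.fract_eq_zero_iff]
    rintro ⟨n, hn⟩
    apply hy
    refine ⟨2 ^ (k - i) * n - m, ?_⟩
    push_cast
    rw [hn, ← hm, ← mul_assoc, ← pow_add, show k - i + i = k by omega]; ring
  have h3 := Int.fract_nonneg ((2:ℚ) ^ i * y)
  have h4 := Int.fract_nonneg ((2:ℚ) ^ i * (2 ^ r * y))
  have h5 := lt_of_le_of_ne h3 h2.symm
  rcases fract_add_cases ((2:ℚ) ^ i * y) ((2:ℚ) ^ i * (2 ^ r * y)) with ⟨h, _⟩ | ⟨h, _⟩ <;> linarith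

lemma SS_int (k : ℕ) (z : ℤ) : SS k z = 0 := by
  unfold SS
  apply Finset.sum_eq_zero
  intro i _
  have : (2:ℚ) ^ i * z = ((2 ^ i * z : ℤ) : ℚ) := by push_cast; ring
  rw [this, Int.fract_intCast]

lemma exists_k (x : ℚ) (hx : Odd x.den) : ∃ k : ℕ, 0 < k ∧ ∃ m : ℤ, ((2:ℚ) ^ k - 1) * x = m := by
  have hc : Nat.Coprime 2 x.den := (Nat.coprime_two_left).2 hx
  refine ⟨x.den.totient, Nat.totient_pos.2 x.den_pos, ?_⟩
  have h := Nat.ModEq.pow_totient hc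
  have h2 : (x.den : ℤ) ∣ 2 ^ x.den.totient - 1 := by
    have := (Nat.modEq_iff_dvd.1 h.symm)
    push_cast at this
    exact this
  obtain ⟨c, hc⟩ := h2
  refine ⟨c * x.num, ?_⟩
  have hcq : (2:ℚ) ^ x.den.totient - 1 = x.den * c := by exact_mod_cast hc
  rw [hcq]
  push_cast
  rw [← Rat.mul_den_eq_num x]; ring

lemma main_sum (k r₁ r₂ : ℕ) (x : ℚ) (m : ℤ) (hm : ((2:ℚ) ^ k - 1) * x = m) :
    SS k (((2 : ℚ) ^ r₁ + 1) * ((2 : ℚ) ^ r₂ + 1) * x) - SS k (((2 : ℚ) ^ r₁ + 1) * x)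
        - SS k (((2 : ℚ) ^ r₂ + 1) * x) + SS k x =
    ∑ i ∈ Finset.range k, GG (2 ^ i * x) (2 ^ i * (2 ^ r₁ * x)) (2 ^ i * (2 ^ r₂ * x))
      (2 ^ i * (2 ^ r₁ * (2 ^ r₂ * x))) := by
  have e1 := SS_pow k r₁ x m hm
  have e2 := SS_pow k r₂ x m hm
  have e3 := SS_pow k r₁ (2 ^ r₂ * x) (2 ^ r₂ * m) (by push_cast; rw [← hm]; ring)
  have e4 := SS_pow k r₂ ((2 ^ r₁ + 1) * x) ((2 ^ r₁ + 1) * m) (by push_cast; rw [← hm]; ring)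
  have e5 := SS_pow k r₁ ((2 ^ r₂ + 1) * x) ((2 ^ r₂ + 1) * m) (by push_cast; rw [← hm]; ring)
  unfold GG
  simp only [← mul_add]
  rw [Finset.sum_add_distrib, Finset.sum_sub_distrib, ← Finset.sum_div, ← Finset.sum_div]
  simp only [Finset.sum_add_distrib]
  change _ = SS k (x + 2 ^ r₁ * x + 2 ^ r₂ * x + 2 ^ r₁ * (2 ^ r₂ * x)) -
    (SS k (x + 2 ^ r₁ * x) + SS k (2 ^ r₂ * x + 2 ^ r₁ * (2 ^ r₂ * x)) + SS k (x + 2 ^ r₂ * x)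
      + SS k (2 ^ r₁ * (x + 2 ^ r₂ * x))) / 2 +
    (SS k x + SS k (2 ^ r₁ * x) + SS k (2 ^ r₂ * x) + SS k (2 ^ r₁ * (2 ^ r₂ * x))) / 4
  rw [show x + 2 ^ r₁ * x + 2 ^ r₂ * x + 2 ^ r₁ * (2 ^ r₂ * x)
        = ((2 : ℚ) ^ r₁ + 1) * ((2 : ℚ) ^ r₂ + 1) * x by ring,
    show x + 2 ^ r₁ * x = ((2 : ℚ) ^ r₁ + 1) * x by ring,
    show x + 2 ^ r₂ * x = ((2 : ℚ) ^ r₂ + 1) * x by ring,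
    show 2 ^ r₂ * x + 2 ^ r₁ * (2 ^ r₂ * x) = 2 ^ r₂ * (((2 : ℚ) ^ r₁ + 1) * x) by ring,
    e3, e4, e5, e1, e2]
  ring

/-- Let `r₁, r₂` be positive integers with `gcd(2^{r₁}+1, 2^{r₂}+1) = 1` and `x` a rational
with odd denominator. Then
`V(2; r₁, r₂; x) = V((2^{r₁}+1)(2^{r₂}+1)x) - V((2^{r₁}+1)x) - V((2^{r₂}+1)x) + V(x)`
lies in `[-3/4, 3/4)`, with value `-3/4` iff `(2^{r₁}+1)(2^{r₂}+1)x ∈ ℤ` and `V(x) = 1/4`. -/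
theorem stmt_5 (V : ℚ → ℚ) (hV : IsV2 V) (r₁ r₂ : ℕ) (hr₁ : 0 < r₁) (hr₂ : 0 < r₂)
    (hcop : Nat.Coprime (2 ^ r₁ + 1) (2 ^ r₂ + 1))
    (x : ℚ) (hx : Odd x.den) :
    V (((2 : ℚ) ^ r₁ + 1) * ((2 : ℚ) ^ r₂ + 1) * x) - V (((2 : ℚ) ^ r₁ + 1) * x)
        - V (((2 : ℚ) ^ r₂ + 1) * x) + V x ∈ Set.Ico (-(3 / 4) : ℚ) (3 / 4) ∧
      (V (((2 : ℚ) ^ r₁ + 1) * ((2 : ℚ) ^ r₂ + 1) * x) - V (((2 : ℚ) ^ r₁ + 1) * x)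
          - V (((2 : ℚ) ^ r₂ + 1) * x) + V x = -(3 / 4) ↔
        (∃ z : ℤ, ((2 : ℚ) ^ r₁ + 1) * ((2 : ℚ) ^ r₂ + 1) * x = (z : ℚ)) ∧ V x = 1 / 4) := by
  obtain ⟨k, hk, m, hm⟩ := exists_k x hx
  have hkq : (0:ℚ) < k := by exact_mod_cast hk
  have hmul : ∀ n : ℤ, ((2:ℚ) ^ k - 1) * (n * x) = ((n * m : ℤ) : ℚ) := by
    intro n; push_cast; rw [← hm]; ring
  have hmA := hmul (2 ^ r₁ + 1)
  have hmB := hmul (2 ^ r₂ + 1)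
  have hmAB := hmul ((2 ^ r₁ + 1) * (2 ^ r₂ + 1))
  rw [show (((2 ^ r₁ + 1 : ℤ)) : ℚ) = 2 ^ r₁ + 1 by push_cast; ring] at hmA
  rw [show (((2 ^ r₂ + 1 : ℤ)) : ℚ) = 2 ^ r₂ + 1 by push_cast; ring] at hmB
  rw [show ((((2 ^ r₁ + 1) * (2 ^ r₂ + 1) : ℤ)) : ℚ) = (2 ^ r₁ + 1) * (2 ^ r₂ + 1) by
    push_cast; ring] at hmAB
  rw [V_eq V hV k hk x _ hm, V_eq V hV k hk _ _ hmA, V_eq V hV k hk _ _ hmB,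
    V_eq V hV k hk _ _ hmAB]
  have hs := main_sum k r₁ r₂ x m hm
  have hne : (Finset.range k).Nonempty := ⟨0, by simpa using hk⟩
  have hlow : -(3/4) * (k:ℚ) ≤ ∑ i ∈ Finset.range k, GG (2 ^ i * x) (2 ^ i * (2 ^ r₁ * x))
      (2 ^ i * (2 ^ r₂ * x)) (2 ^ i * (2 ^ r₁ * (2 ^ r₂ * x))) := by
    have := Finset.card_nsmul_le_sum (Finset.range k) _ (-(3/4) : ℚ)
      (fun i _ => (GG_bound (2 ^ i * x) (2 ^ i * (2 ^ r₁ * x))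
      (2 ^ i * (2 ^ r₂ * x)) (2 ^ i * (2 ^ r₁ * (2 ^ r₂ * x)))).1)
    simp only [Finset.card_range, nsmul_eq_mul] at this
    linarith
  have hup : ∑ i ∈ Finset.range k, GG (2 ^ i * x) (2 ^ i * (2 ^ r₁ * x))
      (2 ^ i * (2 ^ r₂ * x)) (2 ^ i * (2 ^ r₁ * (2 ^ r₂ * x))) < 3/4 * (k:ℚ) := by
    have := Finset.sum_lt_sum_of_nonempty hne
      (fun i _ => (GG_bound (2 ^ i * x) (2 ^ i * (2 ^ r₁ * x))
      (2 ^ i * (2 ^ r₂ * x)) (2 ^ i * (2 ^ r₁ * (2 ^ r₂ * x)))).2.1)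
    simp only [Finset.sum_const, Finset.card_range, nsmul_eq_mul] at this
    linarith
  rw [← sub_div, ← sub_div, ← add_div]
  refine ⟨⟨?_, ?_⟩, ?_, ?_⟩
  · rw [le_div_iff₀ hkq, hs]; exact hlow
  · rw [div_lt_iff₀ hkq, hs]; exact hup
  · intro h
    rw [div_eq_iff hkq.ne', hs] at h
    have hz : ∑ i ∈ Finset.range k, (GG (2 ^ i * x) (2 ^ i * (2 ^ r₁ * x))
      (2 ^ i * (2 ^ r₂ * x)) (2 ^ i * (2 ^ r₁ * (2 ^ r₂ * x))) + 3/4) = 0 := by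
      rw [Finset.sum_add_distrib, h]; simp; ring
    rw [Finset.sum_eq_zero_iff_of_nonneg] at hz
    swap
    · intro i _
      linarith [(GG_bound (2 ^ i * x) (2 ^ i * (2 ^ r₁ * x))
        (2 ^ i * (2 ^ r₂ * x)) (2 ^ i * (2 ^ r₁ * (2 ^ r₂ * x)))).1]
    have hall := fun i hi => (GG_bound (2 ^ i * x) (2 ^ i * (2 ^ r₁ * x))
      (2 ^ i * (2 ^ r₂ * x)) (2 ^ i * (2 ^ r₁ * (2 ^ r₂ * x)))).2.2 (by linarith [hz i hi])
    constructor
    · have h0 := (hall 0 (by simpa using hk)).1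
      rw [Int.fract_eq_zero_iff] at h0
      obtain ⟨z, hz⟩ := h0
      exact ⟨z, by rw [hz]; ring⟩
    · have hsum := Finset.sum_congr rfl (fun i hi => (hall i hi).2)
      simp only [Finset.sum_add_distrib, Finset.sum_const, Finset.card_range, nsmul_eq_mul] at hsum
      change SS k x + SS k (2 ^ r₁ * x) + SS k (2 ^ r₂ * x) + SS k (2 ^ r₁ * (2 ^ r₂ * x)) = _
        at hsum
      rw [SS_pow k r₁ (2 ^ r₂ * x) (2 ^ r₂ * m) (by push_cast; rw [← hm]; ring),
        SS_pow k r₁ x m hm, SS_pow k r₂ x m hm] at hsum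
      rw [div_eq_iff hkq.ne']
      linarith
  · rintro ⟨⟨z, hz⟩, hq⟩
    rw [div_eq_iff hkq.ne'] at hq
    have hxn : ¬ ∃ z : ℤ, x = z := by
      rintro ⟨n, hn⟩
      rw [hn, SS_int] at hq
      linarith
    have hA : ¬ ∃ z : ℤ, ((2:ℚ) ^ r₁ + 1) * x = z := by
      intro h
      have := half k r₁ hk x m hm h hxn
      linarith
    have hB : ¬ ∃ z : ℤ, ((2:ℚ) ^ r₂ + 1) * x = z := by
      intro h
      have := half k r₂ hk x m hm h hxn
      linarith
    have hA' := half k r₂ hk _ _ hmA ⟨z, by rw [← hz]; ring⟩ hA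
    have hB' := half k r₁ hk _ _ hmB ⟨z, by rw [← hz]; ring⟩ hB
    rw [hA', hB', hq, hz, SS_int, div_eq_iff hkq.ne']
    ring
end

section
/- Let t ≥ 2 and let a_1, …, a_t be positive integers such that the numbers 2^{a_1}+1, …, 2^{a_t}+1 are pairwise coprime. Then at least one of the following holds: (i) there exist integers i_1, …, i_t such that for every j the number i_j is not divisible by 2^{a_j}+1, and V(2; a_1, …, a_t; ∑_{j=1}^t i_j/(2^{a_j}+1)) ≠ −1/2; or (ii) there exist an index j_0 ∈ {1, …, t} and integers i_1, …, i_t such that 2^{a_{j_0}}+1 divides i_{j_0} and V(2; a_1, …, a_t; ∑_{j=1}^t i_j/(2^{a_j}+1)) does not lie in the interval [−1/2, 1/2]. -/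
/-- `Vmulti V r x = V(2; r₁, …, r_t; x) = ∑_{S ⊆ {1,…,t}} (-1)^{t - |S|} V((∏_{j ∈ S} (2^{r_j}+1)) x)`. -/
def Vmulti (V : ℚ → ℚ) {t : ℕ} (r : Fin t → ℕ) (x : ℚ) : ℚ :=
  ∑ S : Finset (Fin t), (-1 : ℚ) ^ (t - S.card) * V ((∏ j ∈ S, ((2 : ℚ) ^ (r j) + 1)) * x)


lemma fract_add_nat' (x : ℚ) (z : ℤ) : Int.fract (x + z) = Int.fract x := Int.fract_add_intCast x z

/-- Hermite -/
lemma herm (m : ℕ) (hm : 0 < m) (x : ℚ) :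
    ∑ l ∈ Finset.range m, Int.fract (x + l / m) = Int.fract (m * x) + (m - 1) / 2 := by
  have hm' : (m : ℚ) ≠ 0 := by positivity
  have hm0 : (0 : ℚ) < m := by positivity
  have shift : ∀ x : ℚ, ∑ l ∈ Finset.range m, Int.fract (x + 1 / m + l / m)
      = ∑ l ∈ Finset.range m, Int.fract (x + l / m) := by
    intro x
    have h1 := Finset.sum_range_succ (fun l : ℕ => Int.fract (x + l / m)) m
    have h2 := Finset.sum_range_succ' (fun l : ℕ => Int.fract (x + l / m)) m
    have h3 : Int.fract (x + (m : ℚ) / m) = Int.fract (x + ((0 : ℕ) : ℚ) / m) := by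
      rw [div_self hm']; simp
    have h4 : ∑ l ∈ Finset.range m, Int.fract (x + 1 / m + l / m)
        = ∑ l ∈ Finset.range m, Int.fract (x + ((l + 1 : ℕ) : ℚ) / m) := by
      refine Finset.sum_congr rfl fun l _ => ?_
      congr 1; push_cast; ring
    rw [h4]; linarith
  have shiftn : ∀ (k : ℕ) (x : ℚ), ∑ l ∈ Finset.range m, Int.fract (x + k / m + l / m)
      = ∑ l ∈ Finset.range m, Int.fract (x + l / m) := by
    intro k
    induction k with
    | zero => intro x; simp
    | succ k ih =>
      intro x
      rw [← ih x, ← shift (x + k / m)]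
      refine Finset.sum_congr rfl fun l _ => ?_
      congr 1; push_cast; ring
  have key : ∀ y : ℚ, 0 ≤ y → y < 1 / m →
      ∑ l ∈ Finset.range m, Int.fract (y + l / m) = Int.fract (m * y) + (m - 1) / 2 := by
    intro y hy0 hy1
    have hmy : m * y < 1 := by
      rw [lt_div_iff₀ hm0] at hy1; linarith
    have e1 : Int.fract (m * y) = m * y := Int.fract_eq_self.2 ⟨by positivity, hmy⟩
    have e2 : ∀ l ∈ Finset.range m, Int.fract (y + l / m) = y + l / m := by
      intro l hl
      refine Int.fract_eq_self.2 ⟨by positivity, ?_⟩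
      have hl' : (l : ℚ) + 1 ≤ m := by exact_mod_cast Finset.mem_range.1 hl
      have : y + l / m < (1 + l) / m := by rw [add_div]; linarith
      refine this.trans_le ?_
      rw [div_le_one hm0]; linarith
    rw [Finset.sum_congr rfl e2, e1, Finset.sum_add_distrib, ← Finset.sum_div]
    have e3 : (∑ l ∈ Finset.range m, (l : ℚ)) = m * (m - 1) / 2 := by
      clear * -
      induction m with
      | zero => simp
      | succ k ih => rw [Finset.sum_range_succ, ih]; push_cast; ring
    rw [e3]; simp; field_simp
  -- reduce
  set q : ℤ := ⌊m * x⌋ with hq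
  have hmod := Int.emod_add_mul_ediv q m
  obtain ⟨k, hk⟩ : ∃ k : ℕ, (k : ℤ) = q % m := ⟨(q % m).toNat, by
    rw [Int.toNat_of_nonneg]; exact Int.emod_nonneg _ (by exact_mod_cast hm.ne')⟩
  set y : ℚ := Int.fract (m * x) / m with hy
  have hxy : x = y + k / m + ((q / (m:ℤ) : ℤ) : ℚ) := by
    have e : (m : ℚ) * x = q + Int.fract (m * x) := (Int.floor_add_fract _).symm
    have e2 : (q : ℚ) = k + m * ((q / (m:ℤ) : ℤ) : ℚ) := by
      rw [← hk] at hmod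
      exact_mod_cast hmod.symm
    rw [hy]
    rw [e2] at e
    generalize Int.fract (m * x) = w at *
    field_simp
    linarith
  have hyl := key y (div_nonneg (Int.fract_nonneg _) hm0.le)
    (by rw [hy]; exact div_lt_div_of_pos_right (Int.fract_lt_one _) hm0)
  have e5 : m * y = Int.fract (m * x) := by rw [hy]; field_simp
  rw [e5, Int.fract_fract] at hyl
  rw [← hyl, ← shiftn k y]
  refine Finset.sum_congr rfl fun l _ => ?_
  rw [← Int.fract_add_intCast (y + k / m + l / m) (q / (m:ℤ))]
  congr 1
  rw [hxy]
  clear_value y q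
  ring

def BB (x : ℚ) : ℚ := (Int.fract x - Int.fract (-x)) / 2

lemma BB_int (x : ℚ) (z : ℤ) : BB (x + z) = BB x := by
  unfold BB
  have : -(x + z) = -x + ((-z : ℤ) : ℚ) := by push_cast; ring
  rw [this, Int.fract_add_intCast, Int.fract_add_intCast]

lemma BB_neg (x : ℚ) : BB (-x) = - BB x := by
  unfold BB; rw [neg_neg]; ring

lemma BB_dist (m : ℕ) (hm : 0 < m) (x : ℚ) :
    ∑ l ∈ Finset.range m, BB (x + l / m) = BB (m * x) := by
  unfold BB
  have hm' : (m : ℚ) ≠ 0 := by positivity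
  rw [← Finset.sum_div, Finset.sum_sub_distrib, herm m hm]
  have h2 : ∑ l ∈ Finset.range m, Int.fract (-(x + l / m)) =
      ∑ l ∈ Finset.range m, Int.fract ((-x - (m - 1) / m) + l / m) := by
    rw [← Finset.sum_range_reflect]
    refine Finset.sum_congr rfl fun l hl => ?_
    have hl' := Finset.mem_range.1 hl
    congr 1
    have : ((m - 1 - l : ℕ) : ℚ) = m - 1 - l := by
      rw [Nat.cast_sub (by omega), Nat.cast_sub (by omega)]; simp
    rw [this]; field_simp; ring
  rw [h2, herm m hm]
  have : (m : ℚ) * (-x - (m - 1) / m) = -(m * x) + ((-(m - 1) : ℤ) : ℚ) := by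
    push_cast; field_simp; ring
  rw [this, Int.fract_add_intCast]
  ring

lemma perm_sum (f : ℚ → ℚ) (hf : ∀ x (z : ℤ), f (x + z) = f x) (m u : ℕ) (hm : 0 < m)
    (hu : Nat.Coprime u m) (x : ℚ) :
    ∑ l ∈ Finset.range m, f (x + u * (l / m)) = ∑ l ∈ Finset.range m, f (x + l / m) := by
  have hm' : (m : ℚ) ≠ 0 := by positivity
  obtain ⟨v, -, hv⟩ : ∃ v, True ∧ u * v ≡ 1 [MOD m] := by
    refine ⟨u ^ (Nat.totient m - 1), trivial, ?_⟩
    have := Nat.ModEq.pow_totient hu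
    have hp := Nat.totient_pos.2 hm
    rwa [← pow_succ', Nat.sub_add_cancel hp]
  refine Finset.sum_nbij' (fun l => u * l % m) (fun l => v * l % m) ?_ ?_ ?_ ?_ ?_
  · intro l _; exact Finset.mem_range.2 (Nat.mod_lt _ hm)
  · intro l _; exact Finset.mem_range.2 (Nat.mod_lt _ hm)
  · intro l hl
    have : v * (u * l % m) ≡ l [MOD m] :=
      ((Nat.mod_modEq (u * l) m).mul_left v).trans (by
        have := hv.mul_right l
        rw [one_mul] at this
        convert this using 1; ring)
    exact this.trans (by rfl) |>.trans (by rfl) |> fun h => by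
      have h' : v * (u * l % m) % m = l % m := h
      rw [Nat.mod_eq_of_lt (Finset.mem_range.1 hl)] at h'; exact h'
  · intro l hl
    have : u * (v * l % m) ≡ l [MOD m] :=
      ((Nat.mod_modEq (v * l) m).mul_left u).trans (by
        have := hv.mul_right l
        rw [one_mul] at this
        convert this using 1; ring)
    have h' : u * (v * l % m) % m = l % m := this
    rw [Nat.mod_eq_of_lt (Finset.mem_range.1 hl)] at h'; exact h'
  · intro l _
    rw [← hf (x + ((u * l % m : ℕ) : ℚ) / m) ((u * l / m : ℕ) : ℤ)]
    congr 1
    have : ((u * l : ℕ) : ℚ) = ((u * l % m : ℕ) : ℚ) + m * ((u * l / m : ℕ) : ℚ) := by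
      exact_mod_cast (Nat.mod_add_div (u * l) m).symm
    have h2 : ((u * l : ℕ) : ℚ) = u * l := by push_cast; ring
    rw [h2] at this
    rw [Int.cast_natCast]
    generalize ((u * l % m : ℕ) : ℚ) = r at *
    generalize ((u * l / m : ℕ) : ℚ) = s at *
    rw [← mul_div_assoc, this]
    field_simp
    ring

def WW (K : ℕ) (x : ℚ) : ℚ := ∑ i ∈ Finset.range K, BB (2 ^ i * x)

lemma WW_int (K : ℕ) (x : ℚ) (z : ℤ) : WW K (x + z) = WW K x := by
  unfold WW
  refine Finset.sum_congr rfl fun i _ => ?_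
  rw [← BB_int (2 ^ i * x) (2 ^ i * z)]
  congr 1; push_cast; ring

lemma WW_neg (K : ℕ) (x : ℚ) : WW K (-x) = - WW K x := by
  unfold WW
  rw [← Finset.sum_neg_distrib]
  refine Finset.sum_congr rfl fun i _ => ?_
  rw [← BB_neg]; congr 1; ring

lemma WW_zero (K : ℕ) (z : ℤ) : WW K z = 0 := by
  have := WW_int K 0 z
  rw [zero_add] at this
  rw [this]
  have := WW_neg K 0
  rw [neg_zero] at this; linarith

lemma WW_two (K : ℕ) (x : ℚ) (z : ℤ) (h : (2 ^ K - 1) * x = z) : WW K (2 * x) = WW K x := by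
  unfold WW
  have h1 := Finset.sum_range_succ (fun i => BB (2 ^ i * x)) K
  have h2 := Finset.sum_range_succ' (fun i => BB (2 ^ i * x)) K
  have h3 : BB (2 ^ K * x) = BB (2 ^ 0 * x) := by
    rw [← BB_int (2 ^ 0 * x) z, ← h]; congr 1; ring
  have h4 : ∑ i ∈ Finset.range K, BB (2 ^ i * (2 * x)) = ∑ i ∈ Finset.range K, BB (2 ^ (i+1) * x) :=
    Finset.sum_congr rfl fun i _ => by congr 1; ring
  rw [h4]; linarith

lemma WW_two_pow (K : ℕ) (x : ℚ) (z : ℤ) (h : (2 ^ K - 1) * x = z) (r : ℕ) :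
    WW K (2 ^ r * x) = WW K x := by
  induction r with
  | zero => simp
  | succ r ih =>
    rw [← ih, ← WW_two K (2 ^ r * x) (2 ^ r * z) (by push_cast; rw [← h]; ring)]
    congr 1; ring

lemma WW_anti (K : ℕ) (x : ℚ) (z w : ℤ) (h : (2 ^ K - 1) * x = z) (r : ℕ)
    (h2 : (2 ^ r + 1) * x = w) : WW K x = 0 := by
  have h1 := WW_two_pow K x z h r
  have : 2 ^ r * x = - x + w := by rw [← h2]; ring
  rw [this, WW_int, WW_neg] at h1
  linarith

lemma WW_dist (K m : ℕ) (hm : Odd m) (x : ℚ) :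
    ∑ l ∈ Finset.range m, WW K (x + l / m) = WW K (m * x) := by
  unfold WW
  rw [Finset.sum_comm]
  refine Finset.sum_congr rfl fun i _ => ?_
  have h := perm_sum BB BB_int m (2 ^ i) hm.pos
    (Nat.Coprime.pow_left _ (Nat.coprime_two_left.2 hm)) (2 ^ i * x)
  rw [BB_dist m hm.pos] at h
  rw [show (2 : ℚ) ^ i * (m * x) = m * (2 ^ i * x) by ring, ← h]
  refine Finset.sum_congr rfl fun l _ => ?_
  congr 1; push_cast; ring

lemma WW_dist_mul (K m u : ℕ) (hm : Odd m) (hu : Nat.Coprime u m) (x : ℚ) :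
    ∑ l ∈ Finset.range m, WW K (u * (x + l / m)) = WW K (u * (m * x)) := by
  have h := perm_sum (WW K) (WW_int K) m u hm.pos hu (u * x)
  rw [WW_dist K m hm] at h
  rw [show (u : ℚ) * (m * x) = m * (u * x) by ring, ← h]
  refine Finset.sum_congr rfl fun l _ => ?_
  congr 1; ring

lemma digsum (K : ℕ) : ∀ a : ℕ, a < 2 ^ K →
    (Nat.digits 2 a).sum + ∑ j ∈ Finset.range K, a / 2 ^ (j + 1) = a := by
  induction K with
  | zero => intro a ha; have : a = 0 := by simpa using ha
            subst this; simp
  | succ K ih =>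
    intro a ha
    rcases Nat.eq_zero_or_pos a with rfl | hp
    · simp
    have hb := ih (a / 2) (by rw [pow_succ] at ha; omega)
    rw [Nat.digits_def' (by norm_num) hp, Finset.sum_range_succ', List.sum_cons]
    have : ∀ j ∈ Finset.range K, a / 2 ^ (j + 1 + 1) = a / 2 / 2 ^ (j + 1) := by
      intro j _; rw [Nat.div_div_eq_div_mul]; congr 1; ring
    rw [Finset.sum_congr rfl this]
    simp only [zero_add, pow_one]
    omega

lemma dig_two_mul (a : ℕ) : (Nat.digits 2 (2 * a)).sum = (Nat.digits 2 a).sum := by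
  rcases Nat.eq_zero_or_pos a with rfl | hp
  · simp
  · rw [Nat.digits_def' (by norm_num) (by omega)]; simp

lemma dig_two_mul_add (a : ℕ) : (Nat.digits 2 (2 * a + 1)).sum = (Nat.digits 2 a).sum + 1 := by
  rw [Nat.digits_def' (by norm_num) (by omega)]
  have : (2 * a + 1) / 2 = a := by omega
  have h2 : (2 * a + 1) % 2 = 1 := by omega
  simp [this, h2]; ring

/-- concatenation -/
lemma dig_concat (k : ℕ) : ∀ a b : ℕ, b < 2 ^ k →
    (Nat.digits 2 (2 ^ k * a + b)).sum = (Nat.digits 2 a).sum + (Nat.digits 2 b).sum := by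
  induction k with
  | zero => intro a b hb; have : b = 0 := by simpa using hb
            subst this; simp
  | succ k ih =>
    intro a b hb
    have hi := ih a (b / 2) (by rw [pow_succ] at hb; omega)
    rcases Nat.even_or_odd' b with ⟨c, rfl | rfl⟩
    · have : 2 * c / 2 = c := by omega
      rw [this] at hi
      rw [show 2 ^ (k + 1) * a + 2 * c = 2 * (2 ^ k * a + c) by ring, dig_two_mul, dig_two_mul, hi]
    · have : (2 * c + 1) / 2 = c := by omega
      rw [this] at hi
      rw [show 2 ^ (k + 1) * a + (2 * c + 1) = 2 * (2 ^ k * a + c) + 1 by ring, dig_two_mul_add,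
        dig_two_mul_add, hi]; ring

lemma dig_ones (k : ℕ) : (Nat.digits 2 (2 ^ k - 1)).sum = k := by
  induction k with
  | zero => simp
  | succ k ih =>
    have : 1 ≤ 2 ^ k := Nat.one_le_two_pow
    rw [show 2 ^ (k + 1) - 1 = 2 * (2 ^ k - 1) + 1 by rw [pow_succ]; omega, dig_two_mul_add, ih]

/-- repeated block `0^α 1^α`, `m` times -/
def AA (α : ℕ) : ℕ → ℕ
  | 0 => 0
  | m + 1 => 2 ^ (2 * α) * AA α m + (2 ^ α - 1)

lemma AA_sum (α m : ℕ) : (Nat.digits 2 (AA α m)).sum = m * α := by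
  induction m with
  | zero => simp [AA]
  | succ m ih =>
    rw [AA, dig_concat, ih, dig_ones]
    · ring
    · have : 1 ≤ 2 ^ α := Nat.one_le_two_pow
      have : 2 ^ α ≤ 2 ^ (2 * α) := Nat.pow_le_pow_right (by norm_num) (by omega)
      omega

lemma AA_mul (α m : ℕ) : AA α m * (2 ^ α + 1) + 1 = 2 ^ (2 * α * m) := by
  induction m with
  | zero => simp [AA]
  | succ m ih =>
    have h1 : 1 ≤ 2 ^ α := Nat.one_le_two_pow
    obtain ⟨c, hc⟩ := Nat.exists_eq_add_of_le h1
    rw [AA, show 2 * α * (m + 1) = 2 * α + 2 * α * m by ring, pow_add, ← ih,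
      show 2 ^ (2 * α) = 2 ^ α * 2 ^ α by rw [← pow_add]; congr 1; ring, hc]
    simp only [Nat.add_sub_cancel_left]
    ring

lemma AA_final (α m : ℕ) (hα : 0 < α) :
    (Nat.digits 2 (2 ^ (2 * α * (m + 1)) * (AA α (m + 1) + 1) + (AA α (m + 1) - 1))).sum + α
      = 2 * α * (m + 1) := by
  have h1 : 1 ≤ 2 ^ (α-1) := Nat.one_le_two_pow
  have h2 : 2 ^ α = 2 * 2 ^ (α - 1) := by rw [← pow_succ']; congr 1; omega
  have hlt : AA α (m + 1) - 1 < 2 ^ (2 * α * (m + 1)) := by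
    rw [← AA_mul]
    have : AA α (m+1) ≤ AA α (m+1) * (2 ^ α + 1) := Nat.le_mul_of_pos_right _ (by positivity)
    omega
  rw [dig_concat _ _ _ hlt]
  have e1 : (Nat.digits 2 (AA α (m + 1) + 1)).sum = m * α + 1 := by
    have : AA α (m + 1) + 1 = 2 ^ α * (2 ^ α * AA α m + 1) + 0 := by
      rw [AA, show 2 ^ (2 * α) = 2 ^ α * 2 ^ α by rw [← pow_add]; congr 1; ring]
      have : 2 ^ α - 1 + 1 = 2 ^ α := by omega
      rw [add_assoc, this]; ring
    rw [this, dig_concat _ _ _ (by positivity), dig_concat _ _ _ (by omega), AA_sum]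
    simp
  have e2 : (Nat.digits 2 (AA α (m + 1) - 1)).sum + 1 = (m + 1) * α := by
    rw [← AA_sum α (m + 1)]
    have : AA α (m + 1) = 2 * (2 ^ (2 * α - 1) * AA α m + (2 ^ (α - 1) - 1)) + 1 := by
      rw [AA, show 2 ^ (2 * α) = 2 * 2 ^ (2 * α - 1) by rw [← pow_succ']; congr 1; omega, h2]
      have : 2 * 2 ^ (α - 1) - 1 = 2 * (2 ^ (α - 1) - 1) + 1 := by omega
      rw [this]; ring
    rw [this, dig_two_mul_add, Nat.add_sub_cancel, dig_two_mul]
  have : 2 * α * (m+1) = m * α + 1 + (m + 1) * α - 1 + α := by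
    have : 2 * α * (m+1) = m * α + (m + 1) * α + α := by ring
    omega
  omega

lemma BB_nonint (x : ℚ) (hx : ¬ ∃ w : ℤ, x = w) : BB x = Int.fract x - 1 / 2 := by
  unfold BB
  have h : Int.fract x ≠ 0 := by
    intro h
    exact hx ⟨⌊x⌋, by have := Int.floor_add_fract x; rw [h] at this; linarith⟩
  rw [Int.fract_neg h]; ring

lemma sum_fract (K a : ℕ) (hK : 0 < K) (ha : a < 2 ^ K - 1) :
    ∑ i ∈ Finset.range K, Int.fract ((2 : ℚ) ^ i * (a / (2 ^ K - 1))) = (Nat.digits 2 a).sum := by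
  have h2K : (1 : ℚ) < 2 ^ K := one_lt_pow₀ (by norm_num) hK.ne'
  have hpos : (0 : ℚ) < 2 ^ K - 1 := by linarith
  set x : ℚ := a / (2 ^ K - 1) with hx
  have hx0 : 0 ≤ x := by positivity
  have haq : (a : ℚ) < 2 ^ K - 1 := by
    have h : a + 1 < 2 ^ K := by omega
    have : ((a + 1 : ℕ) : ℚ) < ((2 ^ K : ℕ) : ℚ) := by exact_mod_cast h
    push_cast at this; linarith
  have hx1 : x < 1 := by rw [hx, div_lt_one hpos]; exact haq
  have hxa : (2 ^ K - 1) * x = a := by rw [hx]; field_simp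
  have hfl : ∀ i ∈ Finset.range K, Int.fract ((2 : ℚ) ^ i * x) =
      2 ^ i * x - ((a / 2 ^ (K - 1 - i + 1) : ℕ) : ℚ) := by
    intro i hi
    have hi' := Finset.mem_range.1 hi
    have he : K - 1 - i + 1 = K - i := by omega
    rw [he]
    have hsplit : (2 : ℚ) ^ K = 2 ^ i * 2 ^ (K - i) := by rw [← pow_add]; congr 1; omega
    have hP : (0 : ℚ) < 2 ^ (K - i) := by positivity
    have hval : (2 : ℚ) ^ i * x * 2 ^ (K - i) = a + x := by
      rw [← hxa, hsplit]; ring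
    have hdm := Nat.div_add_mod a (2 ^ (K - i))
    have hml := Nat.mod_lt a (show 2 ^ (K - i) > 0 by positivity)
    have hdm' : (2 : ℚ) ^ (K - i) * ((a / 2 ^ (K - i) : ℕ) : ℚ) + ((a % 2 ^ (K - i) : ℕ) : ℚ) = a := by
      exact_mod_cast hdm
    have hml' : ((a % 2 ^ (K - i) : ℕ) : ℚ) + 1 ≤ 2 ^ (K - i) := by exact_mod_cast hml
    have hr0 : (0 : ℚ) ≤ ((a % 2 ^ (K - i) : ℕ) : ℚ) := by positivity
    have : ⌊(2 : ℚ) ^ i * x⌋ = ((a / 2 ^ (K - i) : ℕ) : ℤ) := by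
      rw [Int.floor_eq_iff]
      generalize a / 2 ^ (K - i) = q at *
      generalize a % 2 ^ (K - i) = r at *
      push_cast
      constructor
      · by_contra hc
        push Not at hc
        have := mul_lt_mul_of_pos_right hc hP
        nlinarith
      · by_contra hc
        push Not at hc
        have := mul_le_mul_of_nonneg_right hc hP.le
        nlinarith
    rw [Int.fract, this, Int.cast_natCast]
  rw [Finset.sum_congr rfl hfl, Finset.sum_sub_distrib,
    Finset.sum_range_reflect (fun j => ((a / 2 ^ (j + 1) : ℕ) : ℚ)) K, ← Finset.sum_mul,
    geom_sum_eq (by norm_num)]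
  have hd := digsum K a (by omega)
  have hd' : ((Nat.digits 2 a).sum : ℚ) + ∑ j ∈ Finset.range K, ((a / 2 ^ (j + 1) : ℕ) : ℚ) = a := by
    exact_mod_cast hd
  rw [show ((2 : ℚ) ^ K - 1) / (2 - 1) * x = (2 ^ K - 1) * x by ring, hxa]
  linarith

lemma V_eq_s6 (V : ℚ → ℚ) (hV : IsV2 V) (K : ℕ) (hK : 0 < K) (x : ℚ) (z : ℤ)
    (h : (2 ^ K - 1) * x = z) (hx : ¬ ∃ w : ℤ, x = w) : V x = WW K x / K + 1 / 2 := by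
  have h2K : (1 : ℚ) < 2 ^ K := one_lt_pow₀ (by norm_num) hK.ne'
  have h2Kn : (1 : ℕ) < 2 ^ K := one_lt_pow₀ (by norm_num) hK.ne'
  have hpos : (0 : ℚ) < 2 ^ K - 1 := by linarith
  have hposz : (0 : ℤ) < 2 ^ K - 1 := by
    have : (1 : ℤ) < 2 ^ K := by exact_mod_cast h2Kn
    linarith
  obtain ⟨a, ha⟩ : ∃ a : ℕ, (a : ℤ) = z % (2 ^ K - 1) := ⟨(z % (2 ^ K - 1)).toNat, by
    rw [Int.toNat_of_nonneg]; exact Int.emod_nonneg _ hposz.ne'⟩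
  have halt : a < 2 ^ K - 1 := by
    have := Int.emod_lt_of_pos z hposz
    rw [← ha] at this
    have h3 : ((a + 1 : ℕ) : ℤ) < ((2 ^ K : ℕ) : ℤ) := by push_cast; linarith
    have h4 : a + 1 < 2 ^ K := by exact_mod_cast h3
    omega
  have hdm := Int.emod_add_mul_ediv z (2 ^ K - 1)
  rw [← ha] at hdm
  set w := z / (2 ^ K - 1) with hw
  have hzq : (z : ℚ) = a + (2 ^ K - 1) * w := by
    rw [← hdm]; push_cast; ring
  have hxe : x = a / (2 ^ K - 1) + w := by
    have : x = z / (2 ^ K - 1) := by rw [← h]; field_simp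
    rw [this, hzq]; field_simp
  have hVx := hV x K a hK halt ⟨w, by rw [hxe]; ring⟩
  rw [hVx, ← sum_fract K a hK halt, hxe, WW_int, WW]
  have hB : ∀ i ∈ Finset.range K, BB ((2 : ℚ) ^ i * (a / (2 ^ K - 1))) =
      Int.fract ((2 : ℚ) ^ i * (a / (2 ^ K - 1))) - 1 / 2 := by
    intro i hi
    apply BB_nonint
    rintro ⟨u, hu⟩
    apply hx
    have hi' := Finset.mem_range.1 hi
    have hsplit : (2 : ℚ) ^ K = 2 ^ (K - i) * 2 ^ i := by rw [← pow_add]; congr 1; omega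
    have h5 : (2 : ℚ) ^ K * (a / (2 ^ K - 1)) = a + a / (2 ^ K - 1) := by field_simp; ring
    refine ⟨2 ^ (K - i) * u - a + w, ?_⟩
    rw [hxe]; push_cast
    rw [← hu, ← mul_assoc, ← hsplit, h5]; ring
  rw [Finset.sum_congr rfl hB, Finset.sum_sub_distrib]
  have : (K : ℚ) ≠ 0 := by positivity
  simp
  field_simp
  ring_nf

lemma V_zero (V : ℚ → ℚ) (hV : IsV2 V) (w : ℤ) : V w = 0 := by
  have := hV w 2 0 (by norm_num) (by norm_num) ⟨w, by simp⟩
  rw [this]; simp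

def HH {ι : Type} (K : ℕ) (n : ι → ℕ) (J : Finset ι) (x : ℚ) : ℚ :=
  ∑ S ∈ J.powerset, (-1 : ℚ) ^ S.card * WW K (((∏ j ∈ S, n j : ℕ) : ℚ) * x)

lemma HH_int {ι : Type} (K : ℕ) (n : ι → ℕ) (J : Finset ι) (x : ℚ) (z : ℤ) :
    HH K n J (x + z) = HH K n J x := by
  unfold HH
  refine Finset.sum_congr rfl fun S _ => ?_
  rw [← WW_int K (((∏ j ∈ S, n j : ℕ) : ℚ) * x) (((∏ j ∈ S, n j : ℕ) : ℤ) * z)]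
  congr 2; push_cast; ring

lemma HH_insert {ι : Type} [DecidableEq ι] (K : ℕ) (n : ι → ℕ) (J : Finset ι) (j : ι) (hj : j ∉ J)
    (x : ℚ) : HH K n (insert j J) x = HH K n J x - HH K n J (n j * x) := by
  unfold HH
  rw [Finset.sum_powerset_insert hj, sub_eq_add_neg, ← Finset.sum_neg_distrib]
  congr 1
  refine Finset.sum_congr rfl fun S hS => ?_
  have hjS : j ∉ S := fun h => hj (Finset.mem_powerset.1 hS h)
  rw [Finset.card_insert_of_notMem hjS, Finset.prod_insert hjS, pow_succ]
  rw [show (((n j * ∏ i ∈ S, n i : ℕ) : ℚ)) * x = ((∏ i ∈ S, n i : ℕ) : ℚ) * (n j * x) by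
    push_cast; ring]
  ring

lemma HH_dist {ι : Type} (K : ℕ) (n : ι → ℕ) (J : Finset ι) (m : ℕ) (hm : Odd m)
    (hc : ∀ j ∈ J, Nat.Coprime (n j) m) (x : ℚ) :
    ∑ l ∈ Finset.range m, HH K n J (x + l / m) = HH K n J (m * x) := by
  unfold HH
  rw [Finset.sum_comm]
  refine Finset.sum_congr rfl fun S hS => ?_
  rw [← Finset.mul_sum, WW_dist_mul K m _ hm]
  exact Nat.Coprime.prod_left fun i hi => hc i (Finset.mem_powerset.1 hS hi)

def VanGen {ι : Type} (K : ℕ) (n : ι → ℕ) (J : Finset ι) : Prop :=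
  ∀ i : ι → ℤ, (∀ k ∈ J, ¬ ((n k : ℤ) ∣ i k)) → HH K n J (∑ k ∈ J, (i k : ℚ) / n k) = 0

lemma van_step {ι : Type} [DecidableEq ι] (K : ℕ) (n : ι → ℕ) (hodd : ∀ k, Odd (n k))
    (hcop : ∀ j k, j ≠ k → Nat.Coprime (n j) (n k)) (J : Finset ι) (j : ι) (hj : j ∉ J)
    (h3 : 3 < n j) (H : VanGen K n (insert j J)) : VanGen K n J := by
  have hcj : ∀ k ∈ J, Nat.Coprime (n k) (n j) := fun k hk => hcop k j (by rintro rfl; exact hj hk)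
  have hnj : (n j : ℚ) ≠ 0 := by have := (hodd j).pos; positivity
  have one : ∀ i : ι → ℤ, (∀ k ∈ J, ¬ ((n k : ℤ) ∣ i k)) →
      HH K n J (∑ k ∈ J, (i k : ℚ) / n k) =
        (2 - n j) * HH K n J (n j * ∑ k ∈ J, (i k : ℚ) / n k) := by
    intro i hi
    set x := ∑ k ∈ J, (i k : ℚ) / n k with hx
    have hd := HH_dist K n J (n j) (hodd j) hcj x
    obtain ⟨m, hm⟩ : ∃ m, n j = m + 1 := ⟨n j - 1, by omega⟩
    have hl : ∀ l ∈ Finset.range m, HH K n J (x + ((l + 1 : ℕ) : ℚ) / n j) = HH K n J (n j * x) := by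
      intro l hl
      have hl' := Finset.mem_range.1 hl
      have := H (Function.update i j ((l + 1 : ℕ) : ℤ)) ?_
      · rw [Finset.sum_insert hj, Function.update_self] at this
        have e : ∑ k ∈ J, ((Function.update i j ((l + 1 : ℕ) : ℤ) k : ℤ) : ℚ) / n k = x := by
          refine Finset.sum_congr rfl fun k hk => ?_
          rw [Function.update_of_ne (by rintro rfl; exact hj hk)]
        rw [e, HH_insert _ _ _ _ hj, Int.cast_natCast, add_comm _ x, sub_eq_zero] at this
        rw [this, ← HH_int K n J (n j * x) ((l + 1 : ℕ) : ℤ)]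
        congr 1
        rw [Int.cast_natCast]
        field_simp
      · intro k hk
        rcases Finset.mem_insert.1 hk with hk | hk
        · subst hk
          rw [Function.update_self]
          intro hdv
          have := Nat.le_of_dvd (by omega) (Int.natCast_dvd_natCast.1 hdv)
          omega
        · have hkj : k ≠ j := fun e => hj (e ▸ hk)
          rw [Function.update_of_ne hkj]
          exact hi k hk
    have hs : ∑ l ∈ Finset.range (n j), HH K n J (x + l / n j) =
        m * HH K n J (n j * x) + HH K n J x := by
      have h7 := Finset.sum_range_succ' (fun l : ℕ => HH K n J (x + l / n j)) m
      rw [← hm, Finset.sum_congr rfl hl] at h7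
      rw [h7]; simp
    have hmq : (n j : ℚ) = m + 1 := by rw [hm]; push_cast; ring
    rw [hs] at hd
    have h9 : (2 - (n j : ℚ)) = 1 - m := by rw [hmq]; ring
    rw [h9]
    linarith
  have many : ∀ (r : ℕ) (i : ι → ℤ), (∀ k ∈ J, ¬ ((n k : ℤ) ∣ i k)) →
      HH K n J (∑ k ∈ J, (i k : ℚ) / n k) =
        (2 - n j) ^ r * HH K n J (n j ^ r * ∑ k ∈ J, (i k : ℚ) / n k) := by
    intro r
    induction r with
    | zero => intro i _; simp
    | succ r ih =>
      intro i hi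
      have hn := ih (fun k => n j * i k) (fun k hk hdv => hi k hk
        (IsCoprime.dvd_of_dvd_mul_left (Nat.isCoprime_iff_coprime.2 (hcj k hk)) hdv))
      have e : ∑ k ∈ J, ((((n j : ℤ) * i k : ℤ)) : ℚ) / n k = n j * ∑ k ∈ J, (i k : ℚ) / n k := by
        rw [Finset.mul_sum]
        refine Finset.sum_congr rfl fun k _ => ?_
        push_cast; ring
      rw [e] at hn
      rw [one i hi, hn, pow_succ, ← mul_assoc, pow_succ, mul_comm (2 - (n j : ℚ)), mul_assoc _ (n j : ℚ)]
  intro i hi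
  set N := ∏ k ∈ J, n k with hN
  have hcN : Nat.Coprime (n j) N := Nat.Coprime.prod_right fun k hk => (hcj k hk).symm
  have hNpos : 0 < N := Finset.prod_pos fun k _ => (hodd k).pos
  have hr : 0 < N.totient := Nat.totient_pos.2 hNpos
  have hE := Nat.ModEq.pow_totient hcN
  have hM := many N.totient i hi
  generalize N.totient = r at *
  have hdvd : (N : ℤ) ∣ (n j : ℤ) ^ r - 1 := by
    have := (Nat.modEq_iff_dvd.1 hE.symm)
    exact_mod_cast this
  have hint : ∃ z : ℤ, (n j : ℚ) ^ r * ∑ k ∈ J, (i k : ℚ) / n k = (∑ k ∈ J, (i k : ℚ) / n k) + z := by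
    have : ∀ k ∈ J, ∃ z : ℤ, (n j : ℚ) ^ r * ((i k : ℚ) / n k) = (i k : ℚ) / n k + z := by
      intro k hk
      have hk2 : (n k : ℤ) ∣ (n j : ℤ) ^ r - 1 :=
        (Int.natCast_dvd_natCast.2 (Finset.dvd_prod_of_mem n hk)).trans hdvd
      obtain ⟨c, hc⟩ := hk2
      have hcq : (n j : ℚ) ^ r - 1 = n k * c := by exact_mod_cast hc
      have hnk : (n k : ℚ) ≠ 0 := by have := (hodd k).pos; positivity
      refine ⟨c * i k, ?_⟩
      rw [show (n j : ℚ) ^ r = n k * c + 1 by linarith]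
      push_cast; field_simp; ring
    choose! f hf using this
    refine ⟨∑ k ∈ J, f k, ?_⟩
    rw [Finset.mul_sum, Finset.sum_congr rfl hf, Finset.sum_add_distrib]
    push_cast; rfl
  obtain ⟨z, hz⟩ := hint
  rw [hz, HH_int] at hM
  have hne : (2 - (n j : ℚ)) ^ r ≠ 1 := by
    intro h
    have habs : |2 - (n j : ℚ)| ^ r = 1 := by rw [← abs_pow, h, abs_one]
    have h4 : (4 : ℚ) ≤ n j := by exact_mod_cast h3
    have : 1 < |2 - (n j : ℚ)| := by rw [lt_abs]; right; linarith
    exact (one_lt_pow₀ this hr.ne').ne' habs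
  have : (1 - (2 - (n j : ℚ)) ^ r) * HH K n J (∑ k ∈ J, (i k : ℚ) / n k) = 0 := by linarith
  rcases mul_eq_zero.1 this with h | h
  · exact absurd (by linarith) hne
  · exact h

lemma van_down {ι : Type} [DecidableEq ι] (K : ℕ) (n : ι → ℕ) (hodd : ∀ k, Odd (n k))
    (hcop : ∀ j k, j ≠ k → Nat.Coprime (n j) (n k)) (J₀ : Finset ι)
    (h3 : ∀ k, k ∉ J₀ → 3 < n k) (J : Finset ι) :
    VanGen K n (J ∪ J₀) → VanGen K n J₀ := by
  induction J using Finset.induction_on with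
  | empty => simp
  | insert j J _ ih =>
    intro H
    rw [Finset.insert_union] at H
    by_cases hj : j ∈ J ∪ J₀
    · rw [Finset.insert_eq_of_mem hj] at H; exact ih H
    · exact ih (van_step K n hodd hcop _ j hj (h3 j fun h => hj (Finset.mem_union_right _ h)) H)

lemma two_V (V : ℚ → ℚ) (hV : IsV2 V) (α m : ℕ) (hα : 0 < α) :
    V (1 / (2 ^ α + 1) + 1 / (2 ^ (2 * α * (m + 1)) + 1)) ≠ 1 / 2 := by
  have hs := AA_final α m hα
  have hA := AA_mul α (m + 1)
  have hA1 : 1 ≤ AA α (m + 1) := by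
    have : 2 ^ 1 ≤ 2 ^ α := Nat.pow_le_pow_right (by norm_num) hα
    rw [AA]; omega
  generalize AA α (m + 1) = A at *
  have hβ : 0 < 2 * α * (m + 1) := by positivity
  generalize hb : 2 * α * (m + 1) = β at *
  have h2α : 2 ≤ 2 ^ α := by
    have : 2 ^ 1 ≤ 2 ^ α := Nat.pow_le_pow_right (by norm_num) hα
    omega
  have hAlt : A + 1 + 1 ≤ 2 ^ β := by rw [← hA]; nlinarith
  have hMlt : 2 ^ β * (A + 1) + (A - 1) < 2 ^ (2 * β) - 1 := by
    have e : 2 ^ (2 * β) = 2 ^ β * 2 ^ β := by rw [← pow_add]; congr 1; ring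
    have : 2 ^ β * (A + 1 + 1) ≤ 2 ^ β * 2 ^ β := Nat.mul_le_mul_left _ hAlt
    rw [e]
    have e3 : 2 ^ β * (A + 1 + 1) = 2 ^ β * (A + 1) + 2 ^ β := by ring
    omega
  have hAq : (A : ℚ) * (2 ^ α + 1) + 1 = 2 ^ β := by exact_mod_cast hA
  have h2β : (1 : ℚ) < 2 ^ β := one_lt_pow₀ (by norm_num) hβ.ne'
  have hv := hV (1 / (2 ^ α + 1) + 1 / (2 ^ β + 1)) (2 * β) _ (by omega) hMlt ⟨0, by
    push_cast [Nat.cast_sub hA1]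
    have e : (2 : ℚ) ^ (2 * β) - 1 = (2 ^ β - 1) * (2 ^ β + 1) := by
      rw [show (2 : ℚ) ^ (2 * β) = 2 ^ β * 2 ^ β by rw [← pow_add]; congr 1; ring]; ring
    have h1 : (2 : ℚ) ^ β - 1 ≠ 0 := by linarith
    have h4 : (0 : ℚ) < 2 ^ α := by positivity
    have h5 : (A : ℚ) ≠ 0 := by
      have : (0:ℚ) < A := by exact_mod_cast hA1
      exact this.ne'
    rw [e, ← hAq]
    rw [show (A : ℚ) * (2 ^ α + 1) + 1 - 1 = A * (2 ^ α + 1) by ring]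
    have h6 : (A : ℚ) * (2 ^ α + 1) + 1 + 1 ≠ 0 := by rw [hAq]; linarith
    field_simp
    ring⟩
  rw [hv]
  intro h
  have hβq : (0 : ℚ) < β := by exact_mod_cast hβ
  have hsq : ((Nat.digits 2 (2 ^ β * (A + 1) + (A - 1))).sum : ℚ) + α = β := by exact_mod_cast hs
  have hαq : (0 : ℚ) < α := by exact_mod_cast hα
  rw [div_eq_iff (by positivity)] at h
  rw [Nat.cast_mul, Nat.cast_ofNat] at h
  linarith

lemma sum_period (K c b : ℕ) (hK : 2 * b ∣ K) (i : ℤ) :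
    ∃ z : ℤ, ((2 : ℚ) ^ K - 1) * (c * ((i : ℚ) / (2 ^ b + 1))) = z := by
  have h : ((2 : ℤ) ^ b + 1) ∣ 2 ^ K - 1 := by
    obtain ⟨d, rfl⟩ := hK
    have h1 : ((2 : ℤ) ^ (2 * b)) - 1 ∣ 2 ^ (2 * b * d) - 1 := by
      rw [pow_mul 2 (2 * b) d]
      simpa using sub_dvd_pow_sub_pow ((2 : ℤ) ^ (2 * b)) 1 d
    refine Dvd.dvd.trans ⟨2 ^ b - 1, ?_⟩ h1
    rw [two_mul, pow_add]; ring
  obtain ⟨d, hd⟩ := h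
  have hdq : (2 : ℚ) ^ K - 1 = (2 ^ b + 1) * d := by exact_mod_cast hd
  have : (0 : ℚ) < 2 ^ b + 1 := by positivity
  refine ⟨d * c * i, ?_⟩
  rw [hdq]; push_cast; field_simp

lemma HH_single {ι : Type} [DecidableEq ι] (K : ℕ) (n : ι → ℕ) (q : ι) (x : ℚ) :
    HH K n {q} x = WW K x - WW K (n q * x) := by
  have : ({q} : Finset ι) = insert q ∅ := rfl
  rw [this, HH_insert _ _ _ _ (by simp)]
  simp [HH]

lemma two_van {ι : Type} [DecidableEq ι] (V : ℚ → ℚ) (hV : IsV2 V) (a : ι → ℕ) (K : ℕ) (hK : 0 < K)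
    (hKa : ∀ k, 2 * a k ∣ K) (p q : ι) (hpq : p ≠ q) (u v c d : ℕ) (huv : u < v)
    (hc : Odd c) (hd : Odd d) (hap : a p = 2 ^ u * c) (haq : a q = 2 ^ v * d)
    (H : VanGen K (fun k => 2 ^ a k + 1) {p, q}) : False := by
  obtain ⟨m, hm⟩ : ∃ m, 2 ^ v = 2 * 2 ^ u * (m + 1) := by
    refine ⟨2 ^ (v - u - 1) - 1, ?_⟩
    rw [Nat.sub_add_cancel Nat.one_le_two_pow, ← pow_succ', ← pow_add]; congr 1; omega
  have hx := two_V V hV (2 ^ u) m (by positivity)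
  rw [← hm] at hx
  have hα1 : 1 ≤ 2 ^ u := Nat.one_le_two_pow
  have hβ1 : 1 ≤ 2 ^ v := Nat.one_le_two_pow
  have hdp : (2 ^ (2 ^ u) + 1) ∣ 2 ^ a p + 1 := by
    rw [hap, pow_mul]; simpa using Odd.nat_add_dvd_pow_add_pow (2 ^ 2 ^ u) 1 hc
  have hdq : (2 ^ (2 ^ v) + 1) ∣ 2 ^ a q + 1 := by
    rw [haq, pow_mul]; simpa using Odd.nat_add_dvd_pow_add_pow (2 ^ 2 ^ v) 1 hd
  obtain ⟨ip, hip⟩ := hdp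
  obtain ⟨iq, hiq⟩ := hdq
  have small : ∀ (b N i : ℕ), 2 ^ N + 1 = (2 ^ b + 1) * i → ¬ (((2 ^ N + 1 : ℕ) : ℤ) ∣ (i : ℤ)) := by
    intro b N i h hdv
    have h0 : 0 < i := by
      rcases Nat.eq_zero_or_pos i with h0 | h0
      · rw [h0] at h; simp at h
      · exact h0
    have := Nat.le_of_dvd h0 (Int.natCast_dvd_natCast.1 hdv)
    have h1 : 1 ≤ 2 ^ b := Nat.one_le_two_pow
    nlinarith
  have fr : ∀ (b N i : ℕ), 2 ^ N + 1 = (2 ^ b + 1) * i →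
      (i : ℚ) / (2 ^ N + 1) = 1 / (2 ^ b + 1) := by
    intro b N i h
    have hq : (2 : ℚ) ^ N + 1 = (2 ^ b + 1) * i := by exact_mod_cast h
    have hp : (0 : ℚ) < 2 ^ N + 1 := by positivity
    have hb : (0 : ℚ) < 2 ^ b + 1 := by positivity
    rw [div_eq_div_iff hp.ne' hb.ne', hq]; ring
  have hH := H (fun k => if k = p then (ip : ℤ) else (iq : ℤ)) (by
    intro k hk
    rcases Finset.mem_insert.1 hk with hk | hk
    · subst hk; simpa using small _ _ _ hip
    · have hk := Finset.mem_singleton.1 hk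
      subst hk
      rw [if_neg hpq.symm]; exact small _ _ _ hiq)
  rw [Finset.sum_pair hpq, if_pos rfl, if_neg hpq.symm] at hH
  rw [show ({p, q} : Finset ι) = insert p {q} from rfl, HH_insert _ _ _ _ (by simpa using hpq),
    HH_single, HH_single] at hH
  push_cast at hH
  -- the four terms
  have hnp : (0 : ℚ) < 2 ^ a p + 1 := by positivity
  have hnq : (0 : ℚ) < 2 ^ a q + 1 := by positivity
  have t1 : WW K ((2 ^ a q + 1) * ((ip : ℚ) / (2 ^ a p + 1) + iq / (2 ^ a q + 1))) = 0 := by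
    have e : ((2 : ℚ) ^ a q + 1) * ((ip : ℚ) / (2 ^ a p + 1) + iq / (2 ^ a q + 1)) =
      ((2 ^ a q + 1 : ℕ) : ℚ) * (((ip : ℤ) : ℚ) / (2 ^ a p + 1)) + ((iq : ℤ) : ℚ) := by
      push_cast; field_simp
    rw [e, WW_int]
    obtain ⟨z, hz⟩ := sum_period K (2 ^ a q + 1) (a p) (hKa p) ip
    refine WW_anti K _ z ((2 ^ a q + 1) * ip) hz (a p) ?_
    push_cast; field_simp
  have t2 : WW K ((2 ^ a p + 1) * ((ip : ℚ) / (2 ^ a p + 1) + iq / (2 ^ a q + 1))) = 0 := by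
    have e : ((2 : ℚ) ^ a p + 1) * ((ip : ℚ) / (2 ^ a p + 1) + iq / (2 ^ a q + 1)) =
      ((2 ^ a p + 1 : ℕ) : ℚ) * (((iq : ℤ) : ℚ) / (2 ^ a q + 1)) + ((ip : ℤ) : ℚ) := by
      push_cast; field_simp; ring
    rw [e, WW_int]
    obtain ⟨z, hz⟩ := sum_period K (2 ^ a p + 1) (a q) (hKa q) iq
    refine WW_anti K _ z ((2 ^ a p + 1) * iq) hz (a q) ?_
    push_cast; field_simp
  have t3 : WW K ((2 ^ a q + 1) * ((2 ^ a p + 1) * ((ip : ℚ) / (2 ^ a p + 1) + iq / (2 ^ a q + 1)))) = 0 := by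
    rw [← WW_zero K ((2 ^ a q + 1) * ip + (2 ^ a p + 1) * iq)]
    congr 1
    push_cast; field_simp
  rw [t1, t2, t3] at hH
  have hW : WW K ((ip : ℚ) / (2 ^ a p + 1) + iq / (2 ^ a q + 1)) = 0 := by linarith
  obtain ⟨z1, hz1⟩ := sum_period K 1 (a p) (hKa p) ip
  obtain ⟨z2, hz2⟩ := sum_period K 1 (a q) (hKa q) iq
  have hVx := V_eq_s6 V hV K hK ((ip : ℚ) / (2 ^ a p + 1) + iq / (2 ^ a q + 1)) (z1 + z2) (by
    push_cast; rw [← hz1, ← hz2]; push_cast; ring) (by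
    rintro ⟨w, hw⟩
    rw [fr _ _ _ hip, fr _ _ _ hiq] at hw
    have l1 : (2 : ℚ) ≤ 2 ^ 2 ^ u := by
      exact_mod_cast (le_self_pow₀ (by norm_num : (1:ℕ) ≤ 2) (by omega : 2 ^ u ≠ 0))
    have l2 : (2 : ℚ) ≤ 2 ^ 2 ^ v := by
      exact_mod_cast (le_self_pow₀ (by norm_num : (1:ℕ) ≤ 2) (by omega : 2 ^ v ≠ 0))
    have b1 : 1 / ((2 : ℚ) ^ 2 ^ u + 1) ≤ 1 / 3 := one_div_le_one_div_of_le (by norm_num) (by linarith)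
    have b2 : 1 / ((2 : ℚ) ^ 2 ^ v + 1) ≤ 1 / 3 := one_div_le_one_div_of_le (by norm_num) (by linarith)
    have p1 : 0 < 1 / ((2 : ℚ) ^ 2 ^ u + 1) := by positivity
    have p2 : 0 < 1 / ((2 : ℚ) ^ 2 ^ v + 1) := by positivity
    have w0 : (0 : ℚ) < w := by linarith
    have w1 : (w : ℚ) < 1 := by linarith
    have w0' : (0 : ℤ) < w := by exact_mod_cast w0
    have w1' : w < (1 : ℤ) := by exact_mod_cast w1
    omega)
  rw [hW, fr _ _ _ hip, fr _ _ _ hiq] at hVx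
  apply hx
  rw [hVx]; simp

/-- For `t ≥ 2` and positive integers `a₁, …, a_t` with `2^{a_j}+1` pairwise coprime,
either (i) there are integers `i_j`, none divisible by `2^{a_j}+1`, with
`V(2; a; ∑ i_j/(2^{a_j}+1)) ≠ -1/2`, or (ii) there are integers `i_j` with `2^{a_{j₀}}+1 ∣ i_{j₀}`
for some `j₀` and `V(2; a; ∑ i_j/(2^{a_j}+1)) ∉ [-1/2, 1/2]`. -/
theorem stmt_6 (V : ℚ → ℚ) (hV : IsV2 V) (t : ℕ) (ht : 2 ≤ t)
    (a : Fin t → ℕ) (hpos : ∀ j, 0 < a j)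
    (hcop : ∀ j k, j ≠ k → Nat.Coprime (2 ^ a j + 1) (2 ^ a k + 1)) :
    (∃ i : Fin t → ℤ, (∀ j, ¬ ((2 ^ a j + 1 : ℤ) ∣ i j)) ∧
        Vmulti V a (∑ j, (i j : ℚ) / ((2 : ℚ) ^ a j + 1)) ≠ -(1 / 2)) ∨
      (∃ j₀ : Fin t, ∃ i : Fin t → ℤ, ((2 ^ a j₀ + 1 : ℤ) ∣ i j₀) ∧
        Vmulti V a (∑ j, (i j : ℚ) / ((2 : ℚ) ^ a j + 1)) ∉
          Set.Icc (-(1 / 2) : ℚ) (1 / 2)) := by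
  left
  by_contra hcon
  push Not at hcon
  set n : Fin t → ℕ := fun k => 2 ^ a k + 1 with hn
  have hodd : ∀ k, Odd (n k) := fun k =>
    Even.add_one ((Nat.even_pow' (hpos k).ne').2 even_two)
  set K := ∏ k, (2 * a k) with hKdef
  have hK : 0 < K := Finset.prod_pos fun k _ => by have := hpos k; omega
  have hKa : ∀ k, 2 * a k ∣ K := fun k => Finset.dvd_prod_of_mem (fun k => 2 * a k) (Finset.mem_univ k)
  have hnq : ∀ k, (n k : ℚ) = 2 ^ a k + 1 := fun k => by simp [hn]
  have hnq0 : ∀ k, (n k : ℚ) ≠ 0 := fun k => by rw [hnq]; positivity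
  have huniv : VanGen K n Finset.univ := by
    intro i hi
    have hv := hcon i (fun j hj => hi j (Finset.mem_univ j) (by simpa [hn] using hj))
    set x := ∑ k, (i k : ℚ) / n k with hx
    have hx' : ∑ j, (i j : ℚ) / ((2 : ℚ) ^ a j + 1) = x := by
      rw [hx]; exact Finset.sum_congr rfl fun k _ => by rw [hnq]
    rw [hx', Vmulti] at hv
    -- multiples of x
    have hper : ∀ c : ℕ, ∃ z : ℤ, ((2 : ℚ) ^ K - 1) * (c * x) = z := by
      intro c
      have h := fun k => sum_period K c (a k) (hKa k) (i k)
      choose f hf using h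
      refine ⟨∑ k, f k, ?_⟩
      rw [← hx', Finset.mul_sum, Finset.mul_sum, Finset.sum_congr rfl (fun k _ => hf k)]
      push_cast; rfl
    -- product of all n m, m ≠ k, times x is congruent to prod * i k / n k
    have hnon : ∀ S : Finset (Fin t), S ≠ Finset.univ →
        ¬ ∃ w : ℤ, ((∏ j ∈ S, n j : ℕ) : ℚ) * x = w := by
      rintro S hS ⟨w, hw⟩
      obtain ⟨k, hk⟩ : ∃ k, k ∉ S := by
        by_contra hall; push Not at hall
        exact hS (Finset.eq_univ_iff_forall.2 hall)
      set R := (Finset.univ.erase k) with hR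
      have hSR : S ⊆ R := fun m hm => Finset.mem_erase.2 ⟨by rintro rfl; exact hk hm, Finset.mem_univ _⟩
      have hdv : (∏ j ∈ S, n j) ∣ ∏ j ∈ R, n j := Finset.prod_dvd_prod_of_subset _ _ _ hSR
      obtain ⟨e, he⟩ := hdv
      have h1 : ((∏ j ∈ R, n j : ℕ) : ℚ) * x = ((e * w : ℤ) : ℚ) := by
        rw [he]; push_cast; rw [← hw]; push_cast; ring
      have h2 : ∀ m ∈ R, ∃ z : ℤ, ((∏ j ∈ R, n j : ℕ) : ℚ) * ((i m : ℚ) / n m) = z := by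
        intro m hm
        obtain ⟨d, hd⟩ := Finset.dvd_prod_of_mem n hm
        refine ⟨d * i m, ?_⟩
        have := hnq0 m
        rw [hd]; push_cast; field_simp
      choose! f hf using h2
      rw [hx, ← Finset.add_sum_erase _ _ (Finset.mem_univ k), mul_add, Finset.mul_sum,
        Finset.sum_congr rfl hf] at h1
      have h3 : (((∏ j ∈ R, n j : ℕ) : ℤ) : ℚ) * i k = (n k : ℤ) * ((e * w - ∑ m ∈ R, f m : ℤ) : ℚ) := by
        have : ((∏ j ∈ R, n j : ℕ) : ℚ) * ((i k : ℚ) / n k) = ((e * w - ∑ m ∈ R, f m : ℤ) : ℚ) := by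
          push_cast at h1 ⊢; linarith
        rw [← this]
        have := hnq0 k
        rw [Int.cast_natCast, Int.cast_natCast]
        field_simp
      have h4 : (n k : ℤ) ∣ ((∏ j ∈ R, n j : ℕ) : ℤ) * i k := ⟨_, by exact_mod_cast h3⟩
      have hcp : Nat.Coprime (n k) (∏ j ∈ R, n j) :=
        Nat.Coprime.prod_right fun m hm => hcop k m (Finset.ne_of_mem_erase hm).symm
      exact hi k (Finset.mem_univ k)
        (IsCoprime.dvd_of_dvd_mul_left (Nat.isCoprime_iff_coprime.2 hcp) h4)
    have hint : ∃ w : ℤ, ((∏ j, n j : ℕ) : ℚ) * x = w := by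
      have h2 : ∀ m : Fin t, ∃ z : ℤ, ((∏ j, n j : ℕ) : ℚ) * ((i m : ℚ) / n m) = z := by
        intro m
        obtain ⟨d, hd⟩ := Finset.dvd_prod_of_mem n (Finset.mem_univ m)
        refine ⟨d * i m, ?_⟩
        have := hnq0 m
        rw [hd]; push_cast; field_simp
      choose f hf using h2
      refine ⟨∑ m, f m, ?_⟩
      rw [hx, Finset.mul_sum, Finset.sum_congr rfl (fun m _ => hf m)]
      push_cast; rfl
    have hterm : ∀ S ∈ (Finset.univ : Finset (Finset (Fin t))),
        (-1 : ℚ) ^ (t - S.card) * V ((∏ j ∈ S, ((2 : ℚ) ^ a j + 1)) * x) =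
        (-1) ^ t / K * ((-1) ^ S.card * WW K (((∏ j ∈ S, n j : ℕ) : ℚ) * x)) +
          ((-1) ^ t / 2 * (-1) ^ S.card - if S = Finset.univ then 1 / 2 else 0) := by
      intro S _
      have hprod : (∏ j ∈ S, ((2 : ℚ) ^ a j + 1)) = ((∏ j ∈ S, n j : ℕ) : ℚ) := by
        push_cast; exact Finset.prod_congr rfl fun k _ => (hnq k).symm
      have hcard : S.card ≤ t := by simpa using Finset.card_le_univ S
      have hsign : (-1 : ℚ) ^ (t - S.card) = (-1) ^ t * (-1) ^ S.card := by
        have h1 : (-1 : ℚ) ^ t = (-1) ^ (t - S.card) * (-1) ^ S.card := by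
          rw [← pow_add]; congr 1; omega
        rw [h1, mul_assoc, ← mul_pow]; simp
      rw [hprod]
      by_cases hS : S = Finset.univ
      · obtain ⟨w, hw⟩ := hint
        subst hS
        rw [if_pos rfl, hw, V_zero V hV, WW_zero]
        have : (-1 : ℚ) ^ t * (-1) ^ t = 1 := by rw [← mul_pow]; simp
        simp only [Finset.card_univ, Fintype.card_fin]
        linear_combination (-1 / 2) * this
      · obtain ⟨z, hz⟩ := hper (∏ j ∈ S, n j)
        rw [if_neg hS, V_eq_s6 V hV K hK _ z hz (hnon S hS), hsign]
        ring
    rw [Finset.sum_congr rfl hterm, Finset.sum_add_distrib, Finset.sum_sub_distrib, ← Finset.mul_sum,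
      ← Finset.mul_sum] at hv
    have hz : ∑ S : Finset (Fin t), (-1 : ℚ) ^ S.card = 0 := by
      have h := Finset.sum_powerset_neg_one_pow_card_of_nonempty
        (x := (Finset.univ : Finset (Fin t))) ⟨⟨0, by omega⟩, Finset.mem_univ _⟩
      rw [Finset.powerset_univ] at h
      exact_mod_cast h
    rw [hz] at hv
    simp only [Finset.sum_ite_eq', Finset.mem_univ, if_true] at hv
    have hprod0 : (-1 : ℚ) ^ t / K * HH K n Finset.univ x = 0 := by
      unfold HH
      rw [Finset.powerset_univ]
      linarith
    have hK0 : (K : ℚ) ≠ 0 := by positivity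
    rcases mul_eq_zero.1 hprod0 with h | h
    · exact absurd h (div_ne_zero (pow_ne_zero _ (by norm_num)) hK0)
    · exact h
  obtain ⟨p, hp⟩ : ∃ p : Fin t, ∀ k, k ≠ p → 3 < n k := by
    have big : ∀ k, a k ≠ 1 → 3 < n k := by
      intro k hk
      have h2 : 2 ≤ a k := by have := hpos k; omega
      have : 2 ^ 2 ≤ 2 ^ a k := Nat.pow_le_pow_right (by norm_num) h2
      simp only [hn]; omega
    by_cases h : ∃ p, a p = 1
    · obtain ⟨p, hp⟩ := h
      refine ⟨p, fun k hk => big k fun h1 => ?_⟩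
      have := hcop k p hk
      rw [h1, hp] at this
      norm_num at this
    · push Not at h
      exact ⟨⟨0, by omega⟩, fun k _ => big k (h k)⟩
  obtain ⟨q, hq⟩ : ∃ q : Fin t, p ≠ q := by
    have : Nontrivial (Fin t) := Fin.nontrivial_iff_two_le.2 ht
    obtain ⟨q, hq⟩ := exists_ne p
    exact ⟨q, hq.symm⟩
  have hvan : VanGen K n {p, q} := by
    refine van_down K n hodd hcop {p, q} (fun k hk => hp k fun h => hk (by simp [h])) Finset.univ ?_
    rwa [Finset.union_eq_left.2 (Finset.subset_univ _)]
  obtain ⟨u, c, hc, hap⟩ := Nat.exists_eq_two_pow_mul_odd (hpos p).ne'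
  obtain ⟨v, d, hd, haq⟩ := Nat.exists_eq_two_pow_mul_odd (hpos q).ne'
  rcases lt_trichotomy u v with h | h | h
  · exact two_van V hV a K hK hKa p q hq u v c d h hc hd hap haq hvan
  · subst h
    have hdp : (2 ^ (2 ^ u) + 1) ∣ 2 ^ a p + 1 := by
      rw [hap, pow_mul]; simpa using Odd.nat_add_dvd_pow_add_pow (2 ^ 2 ^ u) 1 hc
    have hdq : (2 ^ (2 ^ u) + 1) ∣ 2 ^ a q + 1 := by
      rw [haq, pow_mul]; simpa using Odd.nat_add_dvd_pow_add_pow (2 ^ 2 ^ u) 1 hd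
    have := Nat.dvd_gcd hdp hdq
    rw [hcop p q hq] at this
    have h1 := Nat.le_of_dvd one_pos this
    have : 0 < 2 ^ 2 ^ u := by positivity
    omega
  · rw [Finset.pair_comm] at hvan
    exact two_van V hV a K hK hKa q p hq.symm v u d c h hd hc haq hap hvan
end

section
/- Let a_1 and a_2 be positive integers such that gcd(2^{a_1}+1, 2^{a_2}+1) = 1, and let b_1 and b_2 be the 2-parts of a_1 and a_2 (the largest powers of 2 dividing them); assume b_1 > b_2. Let m = log_2(b_1/b_2) (a positive integer, since b_1 and b_2 are powers of 2), and set i_1 = ((2^{a_1}+1)/(2^{b_1}+1)) · ∏_{k=1}^{m} (2^{b_1/2^k} − 1) = ((2^{a_1}+1)/(2^{b_1}+1)) · (2^{b_1/2}−1)(2^{b_1/4}−1)⋯(2^{b_2}−1), and i_2 = (2^{a_2}+1)/(2^{b_2}+1). Then 2^{a_1}+1 does not divide i_1, 2^{a_2}+1 does not divide i_2, and V(i_1/(2^{a_1}+1) + i_2/(2^{a_2}+1)) = 1/4. -/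
theorem aux_digits_s9 (n x y : ℕ) (hx : x < 2 ^ n) :
    (Nat.digits 2 (x + 2 ^ n * y)).sum = (Nat.digits 2 x).sum + (Nat.digits 2 y).sum := by
  induction n generalizing x with
  | zero =>
    have : x = 0 := by simpa using hx
    subst this; simp
  | succ n ih =>
    have h1 : ∀ z : ℕ, (Nat.digits 2 z).sum = z % 2 + (Nat.digits 2 (z / 2)).sum := by
      intro z
      rcases Nat.eq_zero_or_pos z with h | h
      · subst h; simp
      · rw [Nat.digits_def' (by norm_num) h]; simp
    have e : x + 2 ^ (n + 1) * y = x + 2 * (2 ^ n * y) := by ring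
    rw [h1 (x + 2 ^ (n + 1) * y), h1 x, e, Nat.add_mul_mod_self_left,
      Nat.add_mul_div_left _ _ (by norm_num), ih (x / 2) (by rw [pow_succ] at hx; omega)]
    ring

theorem aux_ones (b : ℕ) : (Nat.digits 2 (2 ^ b - 1)).sum = b := by
  induction b with
  | zero => simp
  | succ b ih =>
    have hp : 0 < 2 ^ b := by positivity
    have e : 2 ^ (b + 1) - 1 = (2 ^ b - 1) + 2 ^ b * 1 := by rw [pow_succ]; omega
    rw [e, aux_digits_s9 b _ _ (by omega), ih]; simp

theorem aux_two (b : ℕ) : (Nat.digits 2 (2 * (2 ^ b - 1))).sum = b := by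
  have := aux_digits_s9 1 0 (2 ^ b - 1) (by norm_num)
  simpa [aux_ones] using this

/-- the product, indexed from the bottom -/
def auxP (b : ℕ) : ℕ → ℕ
  | 0 => 1
  | m + 1 => auxP b m * (2 ^ (2 ^ m * b) - 1)

theorem auxP_eq (b m : ℕ) :
    ∏ k ∈ Finset.Icc 1 m, (2 ^ ((2 ^ m * b) / 2 ^ k) - 1) = auxP b m := by
  have : ∀ f : ℕ → ℕ, ∏ k ∈ Finset.Icc 1 m, f k = ∏ k ∈ Finset.range m, f (k + 1) := by
    intro f
    induction m with
    | zero => simp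
    | succ m ih => rw [Finset.prod_Icc_succ_top (by omega), ih, Finset.prod_range_succ]
  rw [this]
  clear this
  induction m with
  | zero => simp [auxP]
  | succ m ih =>
    rw [Finset.prod_range_succ', auxP, ← ih]
    have e0 : 2 ^ (m + 1) * b / 2 ^ (0 + 1) = 2 ^ m * b := by
      rw [show 2 ^ (m + 1) * b = 2 ^ (0 + 1) * (2 ^ m * b) by ring]
      exact Nat.mul_div_cancel_left _ (by norm_num)
    rw [e0]
    congr 1
    apply Finset.prod_congr rfl
    intro k _
    rw [show 2 ^ (m + 1) * b = 2 * (2 ^ m * b) by ring,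
      show 2 ^ (k + 1 + 1) = 2 * 2 ^ (k + 1) by ring, Nat.mul_div_mul_left _ _ (by norm_num)]

theorem auxP_bd (b m : ℕ) (hb : 0 < b) : 0 < auxP b m ∧ auxP b m < 2 ^ (2 ^ m * b) := by
  induction m with
  | zero => simp [auxP]; omega
  | succ m ih =>
    have h2 : 2 ≤ 2 ^ (2 ^ m * b) := by
      calc 2 = 2 ^ 1 := rfl
        _ ≤ _ := Nat.pow_le_pow_right (by norm_num) (Nat.mul_pos (by positivity) hb)
    rw [auxP, show 2 ^ (2 ^ (m + 1) * b) = 2 ^ (2 ^ m * b) * 2 ^ (2 ^ m * b) by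
      rw [← pow_add]; congr 1; ring]
    exact ⟨Nat.mul_pos ih.1 (by omega), Nat.mul_lt_mul_of_lt_of_le ih.2 (by omega) (by omega)⟩

theorem aux_main (b m : ℕ) (hb : 0 < b) : ∃ u w : ℕ,
    u + 1 < 2 ^ (2 * (2 ^ m * b)) ∧ w + 1 < 2 ^ (2 * (2 ^ m * b)) ∧
    (Nat.digits 2 u).sum + (Nat.digits 2 w).sum = 2 ^ m * b ∧
    (0 < m → (Nat.digits 2 u).sum = (Nat.digits 2 w).sum) ∧
    ((u : ℚ) + w) * (2 ^ b + 1) = 2 * ((2 ^ (2 ^ m * b)) ^ 2 - 1) ∧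
    ((u : ℚ) - w) = 2 * auxP b m * (2 ^ (2 ^ m * b) - 1) := by
  induction m with
  | zero =>
    have h2 : 2 ≤ 2 ^ b := by
      calc 2 = 2 ^ 1 := rfl
        _ ≤ _ := Nat.pow_le_pow_right (by norm_num) hb
    have e : 2 ^ (2 * (2 ^ 0 * b)) = 2 ^ b * 2 ^ b := by rw [← pow_add]; congr 1; ring
    refine ⟨2 * (2 ^ b - 1), 0, ?_, ?_, ?_, ?_, ?_, ?_⟩
    · rw [e]
      obtain ⟨c, hc⟩ := Nat.exists_eq_add_of_le h2
      rw [hc]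
      have : 2 + c - 1 = 1 + c := by omega
      rw [this]; nlinarith
    · rw [e]; nlinarith
    · rw [aux_two]; simp
    · simp
    · push_cast [Nat.cast_sub (show 1 ≤ 2 ^ b by omega)]; simp; ring
    · push_cast [Nat.cast_sub (show 1 ≤ 2 ^ b by omega)]; simp [auxP]
  | succ m ih =>
    obtain ⟨u, w, hu, hw, hs, -, h1, h2⟩ := ih
    have e : 2 ^ (2 * (2 ^ (m + 1) * b)) = 2 ^ (2 * (2 ^ m * b)) * 2 ^ (2 * (2 ^ m * b)) := by
      rw [← pow_add]; congr 1; ring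
    have e' : (2 : ℚ) ^ (2 ^ (m + 1) * b) = (2 ^ (2 ^ m * b)) ^ 2 := by
      rw [← pow_mul]; congr 1; ring
    have e2 : (2 : ℚ) ^ (2 * (2 ^ m * b)) = (2 ^ (2 ^ m * b)) ^ 2 := by
      rw [← pow_mul]; congr 1; ring
    have hQ : 1 ≤ 2 ^ (2 ^ m * b) := Nat.one_le_two_pow
    refine ⟨w + 2 ^ (2 * (2 ^ m * b)) * u, u + 2 ^ (2 * (2 ^ m * b)) * w, ?_, ?_, ?_, ?_, ?_, ?_⟩
    · rw [e]; nlinarith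
    · rw [e]; nlinarith
    · rw [aux_digits_s9 _ _ _ (by omega), aux_digits_s9 _ _ _ (by omega), pow_succ]; linarith
    · intro _
      rw [aux_digits_s9 _ _ _ (by omega), aux_digits_s9 _ _ _ (by omega)]; ring
    · push_cast
      rw [e', e2]
      linear_combination (1 + ((2 : ℚ) ^ (2 ^ m * b)) ^ 2) * h1
    · rw [auxP]
      push_cast [Nat.cast_sub hQ]
      rw [e', e2]
      linear_combination (((2 : ℚ) ^ (2 ^ m * b)) ^ 2 - 1) * h2

theorem aux_dvd (a : ℕ) (ha : 0 < a) : 2 ^ (2 ^ padicValNat 2 a) + 1 ∣ 2 ^ a + 1 := by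
  obtain ⟨c, hc⟩ := pow_padicValNat_dvd (p := 2) (n := a)
  have hodd : Odd c := by
    rw [← Nat.not_even_iff_odd]
    rintro hev
    obtain ⟨d, hd⟩ := hev.two_dvd
    apply pow_succ_padicValNat_not_dvd (p := 2) (n := a) ha.ne'
    refine ⟨d, ?_⟩
    rw [pow_succ, mul_assoc, ← hd]; exact hc
  have := Odd.nat_add_dvd_pow_add_pow (2 ^ (2 ^ padicValNat 2 a)) 1 hodd
  rw [one_pow, ← pow_mul, ← hc] at this
  exact this

/-- For positive integers `a₁, a₂` with `gcd(2^{a₁}+1, 2^{a₂}+1)=1`, `b_j = 2`-part of `a_j`,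
`b₁ > b₂`, `m = log₂(b₁/b₂)`, and
`i₁ = ((2^{a₁}+1)/(2^{b₁}+1)) ∏_{k=1}^{m} (2^{b₁/2^k}-1)`, `i₂ = (2^{a₂}+1)/(2^{b₂}+1)`,
one has `2^{a₁}+1 ∤ i₁`, `2^{a₂}+1 ∤ i₂`, and `V(i₁/(2^{a₁}+1) + i₂/(2^{a₂}+1)) = 1/4`. -/
theorem stmt_9 (V : ℚ → ℚ) (hV : IsV2 V) (a₁ a₂ : ℕ) (ha₁ : 0 < a₁) (ha₂ : 0 < a₂)
    (hcop : Nat.Coprime (2 ^ a₁ + 1) (2 ^ a₂ + 1))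
    (b₁ b₂ : ℕ) (hb₁ : b₁ = 2 ^ (padicValNat 2 a₁)) (hb₂ : b₂ = 2 ^ (padicValNat 2 a₂))
    (hgt : b₂ < b₁)
    (m : ℕ) (hm : m = Nat.log 2 (b₁ / b₂))
    (i₁ i₂ : ℕ)
    (hi₁ : i₁ = ((2 ^ a₁ + 1) / (2 ^ b₁ + 1)) * ∏ k ∈ Finset.Icc 1 m, (2 ^ (b₁ / 2 ^ k) - 1))
    (hi₂ : i₂ = (2 ^ a₂ + 1) / (2 ^ b₂ + 1)) :
    ¬ ((2 ^ a₁ + 1) ∣ i₁) ∧ ¬ ((2 ^ a₂ + 1) ∣ i₂) ∧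
      V ((i₁ : ℚ) / ((2 : ℚ) ^ a₁ + 1) + (i₂ : ℚ) / ((2 : ℚ) ^ a₂ + 1)) = 1 / 4 := by
  have hb2 : 0 < b₂ := by rw [hb₂]; positivity
  have d1 := aux_dvd a₁ ha₁
  have d2 := aux_dvd a₂ ha₂
  rw [← hb₁] at d1
  rw [← hb₂] at d2
  have hbm : b₁ = 2 ^ m * b₂ ∧ 0 < m := by
    have hlt : padicValNat 2 a₂ < padicValNat 2 a₁ := by
      rw [hb₁, hb₂] at hgt
      exact (Nat.pow_lt_pow_iff_right (by norm_num)).1 hgt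
    have : m = padicValNat 2 a₁ - padicValNat 2 a₂ := by
      rw [hm, hb₁, hb₂, Nat.pow_div hlt.le (by norm_num), Nat.log_pow (by norm_num)]
    refine ⟨?_, by omega⟩
    rw [hb₁, hb₂, this, ← pow_add]; congr 1; omega
  obtain ⟨hbm, hm0⟩ := hbm
  clear hb₁ hb₂ hm hcop
  subst hbm
  rw [auxP_eq] at hi₁
  obtain ⟨c, hc⟩ := d1
  obtain ⟨d, hd⟩ := d2
  have hc0 : 0 < c := by
    rcases Nat.eq_zero_or_pos c with h | h
    · subst h; simp at hc
    · exact h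
  have hd0 : 0 < d := by
    rcases Nat.eq_zero_or_pos d with h | h
    · subst h; simp at hd
    · exact h
  rw [hc, Nat.mul_div_cancel_left _ (by positivity)] at hi₁
  rw [hd, Nat.mul_div_cancel_left _ (by positivity)] at hi₂
  obtain ⟨hP0, hP1⟩ := auxP_bd b₂ m hb2
  refine ⟨?_, ?_, ?_⟩
  · rw [hc, hi₁, mul_comm]
    intro h
    have := Nat.le_of_dvd hP0 (Nat.dvd_of_mul_dvd_mul_left hc0 h)
    omega
  · rw [hd, hi₂]
    intro h
    have := Nat.le_of_dvd hd0 h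
    have h2 : 0 < 2 ^ b₂ := by positivity
    nlinarith
  · obtain ⟨u, w, hu, -, hs, hs', h1, h2⟩ := aux_main b₂ m hb2
    have hs' := hs' hm0
    have hBpos : 0 < 2 ^ m * b₂ := by positivity
    rw [hV _ (2 * (2 ^ m * b₂)) u (by omega) (by omega) ⟨0, ?_⟩]
    · rw [← hs'] at hs
      have : (((2 ^ m * b₂ : ℕ)) : ℚ) = 2 * ((Nat.digits 2 u).sum : ℚ) := by
        rw [← hs]; push_cast; ring
      have hne : (((2 ^ m * b₂ : ℕ)) : ℚ) ≠ 0 := by exact_mod_cast hBpos.ne'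
      rw [Nat.cast_mul 2, this]
      rw [this] at hne
      have : ((Nat.digits 2 u).sum : ℚ) ≠ 0 := fun h => hne (by rw [h]; simp)
      generalize ((Nat.digits 2 u).sum : ℚ) = t at *
      rw [Nat.cast_ofNat]
      field_simp
      norm_num
    · have hcq : (2 : ℚ) ^ a₁ + 1 = (2 ^ (2 ^ m * b₂) + 1) * c := by exact_mod_cast hc
      have hdq : (2 : ℚ) ^ a₂ + 1 = (2 ^ b₂ + 1) * d := by exact_mod_cast hd
      have e2 : (2 : ℚ) ^ (2 * (2 ^ m * b₂)) = (2 ^ (2 ^ m * b₂)) ^ 2 := by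
        rw [← pow_mul]; congr 1; ring
      have hQ1 : (1 : ℚ) < 2 ^ (2 ^ m * b₂) := one_lt_pow₀ (by norm_num) hBpos.ne'
      have hq0 : (0 : ℚ) < 2 ^ b₂ := by positivity
      have hcn : (c : ℚ) ≠ 0 := by exact_mod_cast hc0.ne'
      have hdn : (d : ℚ) ≠ 0 := by exact_mod_cast hd0.ne'
      rw [hcq, hdq, e2, hi₁, hi₂]
      push_cast
      generalize (2 : ℚ) ^ (2 ^ m * b₂) = Q at *
      generalize (2 : ℚ) ^ b₂ = q at *
      have n1 : Q + 1 ≠ 0 := by linarith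
      have n2 : Q - 1 ≠ 0 := by linarith
      have n3 : q + 1 ≠ 0 := by linarith
      have n4 : Q ^ 2 - 1 ≠ 0 := by
        rw [show Q ^ 2 - 1 = (Q + 1) * (Q - 1) by ring]; exact mul_ne_zero n1 n2
      have s1 : (c : ℚ) * (auxP b₂ m) / ((Q + 1) * c) = auxP b₂ m / (Q + 1) := by
        field_simp
      have s2 : (d : ℚ) / ((q + 1) * d) = 1 / (q + 1) := by
        field_simp
      have s3 : (auxP b₂ m : ℚ) / (Q + 1) = auxP b₂ m * (Q - 1) / (Q ^ 2 - 1) := by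
        rw [div_eq_div_iff n1 n4]; ring
      have s4 : (1 : ℚ) / (q + 1) = ((u + w) / 2) / (Q ^ 2 - 1) := by
        rw [div_eq_div_iff n3 n4]; linear_combination -h1 / 2
      rw [s1, s2, s3, s4, ← add_div, ← sub_div, div_eq_zero_iff]
      left
      linear_combination -h2 / 2
end

section
/- Let b_1 > b_2 be powers of 2, let m = log_2(b_1/b_2) ≥ 1, and set B = ∏_{k=0}^{m−1} (2^{b_1/2^k} − 1) + ∏_{k=0}^{m−1} (2^{b_1/2^k} + 1), i.e., B = (2^{b_1}−1)(2^{b_1/2}−1)⋯(2^{2b_2}−1) + (2^{b_1}+1)(2^{b_1/2}+1)⋯(2^{2b_2}+1). Then 0 < (2^{b_2}−1)·B < 2^{2b_1} − 1, and the binary expansion of (2^{b_2}−1)·B has exactly b_1/2 digits equal to 1. -/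
lemma pc_step (n : ℕ) : (Nat.digits 2 n).count 1 = n % 2 + (Nat.digits 2 (n / 2)).count 1 := by
  rcases Nat.eq_zero_or_pos n with rfl | h
  · simp
  · rw [Nat.digits_def' (by norm_num) h, List.count_cons]
    rcases Nat.mod_two_eq_zero_or_one n with h | h <;> simp [h] ; omega

lemma pc_add (k : ℕ) : ∀ a c : ℕ, a < 2 ^ k →
    (Nat.digits 2 (2 ^ k * c + a)).count 1
      = (Nat.digits 2 c).count 1 + (Nat.digits 2 a).count 1 := by
  induction k with
  | zero => intro a c h; have : a = 0 := by simpa using h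
            subst this; simp
  | succ k ih =>
    intro a c h
    rw [pc_step (2 ^ (k + 1) * c + a), pc_step a]
    have e : 2 ^ (k + 1) * c + a = 2 * (2 ^ k * c) + a := by ring
    have h1 : (2 ^ (k + 1) * c + a) % 2 = a % 2 := by rw [e]; omega
    have h2 : (2 ^ (k + 1) * c + a) / 2 = 2 ^ k * c + a / 2 := by rw [e]; omega
    rw [h1, h2, ih _ _ (by rw [pow_succ] at h; omega)]
    omega

lemma pc_ones (b : ℕ) : (Nat.digits 2 (2 ^ b - 1)).count 1 = b := by
  induction b with
  | zero => simp
  | succ b ih =>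
    have hp : 0 < 2 ^ b := by positivity
    have e : 2 ^ (b + 1) = 2 * 2 ^ b := by ring
    rw [pc_step, show (2 ^ (b + 1) - 1) % 2 = 1 by omega,
      show (2 ^ (b + 1) - 1) / 2 = 2 ^ b - 1 by omega, ih]
    omega

lemma pc_key (b : ℕ) (hb : 1 ≤ b) (n : ℕ) : ∃ D E : ℕ,
    (∏ j ∈ Finset.range (n + 1), (2 ^ (2 * b * 2 ^ j) - 1)) +
      (∏ j ∈ Finset.range (n + 1), (2 ^ (2 * b * 2 ^ j) + 1)) = D ∧
    (∏ j ∈ Finset.range (n + 1), (2 ^ (2 * b * 2 ^ j) + 1)) =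
      (∏ j ∈ Finset.range (n + 1), (2 ^ (2 * b * 2 ^ j) - 1)) + E ∧
    0 < (2 ^ b - 1) * D ∧
    (2 ^ b - 1) * D + 2 ≤ 2 ^ (2 * b * 2 ^ (n + 1)) ∧
    (2 ^ b - 1) * E + 2 ≤ 2 ^ (2 * b * 2 ^ (n + 1)) ∧
    (Nat.digits 2 ((2 ^ b - 1) * D)).count 1 = b * 2 ^ n ∧
    (Nat.digits 2 ((2 ^ b - 1) * E)).count 1 = b * 2 ^ n := by
  induction n with
  | zero =>
    obtain ⟨u, hu⟩ : ∃ u, 2 ^ b = u + 2 := by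
      have : 2 ^ 1 ≤ 2 ^ b := Nat.pow_le_pow_right (by norm_num) hb
      exact ⟨2 ^ b - 2, by omega⟩
    have hy : 2 ^ (2 * b) = (u + 2) ^ 2 := by rw [← hu]; ring
    have hy2 : 2 ^ (2 * b * 2) = (u + 2) ^ 4 := by rw [← hu]; ring
    have hy1 : 1 ≤ 2 ^ (2 * b) := Nat.one_le_two_pow
    have hx : 2 ^ b - 1 = u + 1 := by omega
    have c2 : (Nat.digits 2 ((2 ^ b - 1) * 2)).count 1 = b := by
      rw [pc_step, show ((2 ^ b - 1) * 2) % 2 = 0 by omega,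
        show ((2 ^ b - 1) * 2) / 2 = 2 ^ b - 1 by omega, pc_ones]
      omega
    refine ⟨2 * 2 ^ (2 * b), 2, ?_, ?_, ?_, ?_, ?_, ?_, ?_⟩
    · simp; omega
    · simp; omega
    · rw [hx]; positivity
    · simp only [zero_add, pow_one]; rw [hx, hy, hy2]; nlinarith [Nat.zero_le (u^2), Nat.zero_le (u^3), Nat.zero_le (u^4)]
    · simp only [zero_add, pow_one]; rw [hx, hy2]; nlinarith [Nat.zero_le (u^2), Nat.zero_le (u^3), Nat.zero_le (u^4)]
    · have := pc_add (2 * b) 0 ((2 ^ b - 1) * 2) (by positivity)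
      rw [show (2 ^ b - 1) * (2 * 2 ^ (2 * b)) = 2 ^ (2 * b) * ((2 ^ b - 1) * 2) + 0 by ring, this, c2]
      simp
    · simpa using c2
  | succ n ih =>
    obtain ⟨D, E, h1, h2, h3, h4, h5, h6, h7⟩ := ih
    rw [Finset.prod_range_succ _ (n + 1), Finset.prod_range_succ _ (n + 1)]
    set A := ∏ j ∈ Finset.range (n + 1), (2 ^ (2 * b * 2 ^ j) - 1)
    set C := ∏ j ∈ Finset.range (n + 1), (2 ^ (2 * b * 2 ^ j) + 1)
    have hYY : 2 ^ (2 * b * 2 ^ (n + 1 + 1)) = 2 ^ (2 * b * 2 ^ (n + 1)) * 2 ^ (2 * b * 2 ^ (n + 1)) := by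
      rw [← pow_add]; congr 1; ring
    have e1 : ∀ F G : ℕ, (2 ^ b - 1) * (2 ^ (2 * b * 2 ^ (n + 1)) * F + G) =
      2 ^ (2 * b * 2 ^ (n + 1)) * ((2 ^ b - 1) * F) + (2 ^ b - 1) * G := by intros; ring
    refine ⟨2 ^ (2 * b * 2 ^ (n + 1)) * D + E, 2 ^ (2 * b * 2 ^ (n + 1)) * E + D, ?_, ?_, ?_, ?_, ?_, ?_, ?_⟩
    · obtain ⟨Z, hZ⟩ : ∃ Z, 2 ^ (2 * b * 2 ^ (n + 1)) = Z + 1 := ⟨2 ^ (2 * b * 2 ^ (n + 1)) - 1, by omega⟩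
      rw [hZ, ← h1, h2, Nat.add_sub_cancel]; ring
    · obtain ⟨Z, hZ⟩ : ∃ Z, 2 ^ (2 * b * 2 ^ (n + 1)) = Z + 1 := ⟨2 ^ (2 * b * 2 ^ (n + 1)) - 1, by omega⟩
      rw [hZ, ← h1, h2, Nat.add_sub_cancel]; ring
    · rw [e1]; have : 0 < 2 ^ (2 * b * 2 ^ (n + 1)) := by positivity
      positivity
    · rw [e1, hYY]; nlinarith
    · rw [e1, hYY]; nlinarith
    · rw [e1, pc_add _ _ _ (by omega), h6, h7]; ring
    · rw [e1, pc_add _ _ _ (by omega), h6, h7]; ring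

/-- Let `b₁ > b₂` be powers of 2, `m = log₂(b₁/b₂) ≥ 1`, and
`B = ∏_{k=0}^{m-1} (2^{b₁/2^k} - 1) + ∏_{k=0}^{m-1} (2^{b₁/2^k} + 1)`. Then
`0 < (2^{b₂}-1) B < 2^{2 b₁} - 1` and the binary expansion of `(2^{b₂}-1) B` has
exactly `b₁/2` digits equal to `1`. -/
theorem stmt_10 (b₁ b₂ : ℕ) (e₁ e₂ : ℕ) (hb₁ : b₁ = 2 ^ e₁) (hb₂ : b₂ = 2 ^ e₂)
    (hgt : b₂ < b₁) (m : ℕ) (hm : m = Nat.log 2 (b₁ / b₂)) (hm1 : 1 ≤ m)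
    (B : ℕ)
    (hB : B = (∏ k ∈ Finset.range m, (2 ^ (b₁ / 2 ^ k) - 1)) +
      ∏ k ∈ Finset.range m, (2 ^ (b₁ / 2 ^ k) + 1)) :
    0 < (2 ^ b₂ - 1) * B ∧ (2 ^ b₂ - 1) * B < 2 ^ (2 * b₁) - 1 ∧
      (Nat.digits 2 ((2 ^ b₂ - 1) * B)).count 1 = b₁ / 2 := by
  subst hb₁ hb₂
  have hlt : e₂ < e₁ := (Nat.pow_lt_pow_iff_right (by norm_num)).1 hgt
  rw [Nat.pow_div hlt.le (by norm_num), Nat.log_pow (by norm_num)] at hm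
  obtain ⟨n, rfl⟩ : ∃ n, m = n + 1 := ⟨m - 1, by omega⟩
  obtain rfl : e₁ = e₂ + (n + 1) := by omega
  obtain ⟨D, E, h1, h2, h3, h4, h5, h6, h7⟩ := pc_key (2 ^ e₂) Nat.one_le_two_pow n
  have hk : ∀ j ∈ Finset.range (n + 1),
      2 ^ (e₂ + (n + 1)) / 2 ^ (n + 1 - 1 - j) = 2 * 2 ^ e₂ * 2 ^ j := by
    intro j hj
    have hj := Finset.mem_range.1 hj
    rw [Nat.pow_div (by omega) (by norm_num),
      show e₂ + (n + 1) - (n + 1 - 1 - j) = 1 + e₂ + j by omega, pow_add, pow_add, pow_one]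
  have hBD : B = D := by
    rw [hB, ← h1]
    congr 1
    · rw [← Finset.prod_range_reflect]
      exact Finset.prod_congr rfl fun j hj => by rw [hk j hj]
    · rw [← Finset.prod_range_reflect]
      exact Finset.prod_congr rfl fun j hj => by rw [hk j hj]
  rw [hBD]
  have e : 2 * 2 ^ (e₂ + (n + 1)) = 2 * 2 ^ e₂ * 2 ^ (n + 1) := by ring
  refine ⟨h3, by rw [e]; omega, ?_⟩
  rw [h6, show 2 ^ (e₂ + (n + 1)) = 2 ^ e₂ * 2 ^ n * 2 by ring]
  omega
end
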